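/- Every 3-connected graph on n vertices with minimum degree δ ≥ max{(n + 2κ)/4, α} is hamiltonian, where κ is the connectivity and α the independence number. -/

import Mathlib

open SimpleGraph

variable {V : Type*}

/-- `G` is `k`-connected: more than `k` vertices and removing fewer than `k`
vertices leaves a connected graph. -/
def KConnected (G : SimpleGraph V) [Fintype V] [DecidableEq V] (k : ℕ) : Prop :=
  k < Fintype.card V ∧
    ∀ S : Finset V, S.card < k → (G.induce ((↑S : Set V)ᶜ)).Connected

/-- vertex connectivity `κ`. -/
noncomputable def connectivity (G : SimpleGraph V) [Fintype V] [DecidableEq V] : ℕ :=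
  sSup {k | KConnected G k}

/-- independence number `α`. -/
noncomputable def indepNumber (G : SimpleGraph V) [Fintype V] [DecidableEq V] : ℕ :=
  sSup {k | ∃ s : Finset V, (∀ u ∈ s, ∀ v ∈ s, ¬ G.Adj u v) ∧ s.card = k}

/-- circumference `c`: length of a longest cycle. -/
noncomputable def circumference (G : SimpleGraph V) [Fintype V] [DecidableEq V] : ℕ :=
  sSup {n | ∃ (v : V) (w : G.Walk v v), w.IsCycle ∧ w.length = n}

/-- `w` is a longest cycle of `G`. -/
def IsLongestCycle {G : SimpleGraph V} {v : V} (w : G.Walk v v) : Prop :=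
  w.IsCycle ∧ ∀ (u : V) (w' : G.Walk u u), w'.IsCycle → w'.length ≤ w.length

/-- dominating cycle: every edge has an endpoint on the cycle. -/
def IsDominatingCycle {G : SimpleGraph V} {v : V} (w : G.Walk v v) : Prop :=
  w.IsCycle ∧ ∀ x y, G.Adj x y → x ∈ w.support ∨ y ∈ w.support

/-- generalized cycle of length `n` with vertex set `W`: single vertices are
cycles of length 1, edges are cycles of length 2. -/
def ExtCycle (G : SimpleGraph V) (W : Set V) (n : ℕ) : Prop :=
  (n = 1 ∧ ∃ v : V, W = {v}) ∨
  (n = 2 ∧ ∃ u v : V, G.Adj u v ∧ W = {u, v}) ∨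
  (3 ≤ n ∧ ∃ (v : V) (w : G.Walk v v), w.IsCycle ∧ w.length = n ∧
      W = {x | x ∈ w.support})

/-- `p̄`: the length of a longest path in `G \ C`. -/
noncomputable def pathBar (G : SimpleGraph V) [Fintype V] [DecidableEq V] {v : V} (w : G.Walk v v) : ℕ :=
  sSup {n | ∃ (a b : {x : V | x ∉ w.support})
      (p : (G.induce {x : V | x ∉ w.support}).Walk a b), p.IsPath ∧ p.length = n}

/-- `c̄`: the length of a longest (generalized) cycle in `G \ C`. -/
noncomputable def cycBar (G : SimpleGraph V) [Fintype V] [DecidableEq V] {v : V} (w : G.Walk v v) : ℕ :=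
  sSup {n | ∃ W, ExtCycle (G.induce {x : V | x ∉ w.support}) W n}

/-- `CD_m`-cycle: every (generalized) cycle of length at least `m` meets `w`. -/
def IsCDCycle (G : SimpleGraph V) {v : V} (w : G.Walk v v) (m : ℕ) : Prop :=
  w.IsCycle ∧ ∀ (W : Set V) (n : ℕ), ExtCycle G W n → m ≤ n → ∃ x ∈ W, x ∈ w.support

namespace NK

/-- `l` is a nonempty duplicate-free list forming a path from `a` to `b`. -/
def PL (G : SimpleGraph V) (l : List V) (a b : V) : Prop :=
  l.IsChain G.Adj ∧ l.Nodup ∧ l.head? = some a ∧ l.getLast? = some b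

theorem PL.append {G : SimpleGraph V} {l₁ l₂ : List V} {a b c d : V}
    (h₁ : PL G l₁ a b) (h₂ : PL G l₂ c d) (h : G.Adj b c)
    (hd : ∀ x ∈ l₁, x ∉ l₂) : PL G (l₁ ++ l₂) a d := by
  obtain ⟨c1, n1, a1, b1⟩ := h₁
  obtain ⟨c2, n2, a2, b2⟩ := h₂
  refine ⟨?_, ?_, ?_, ?_⟩
  · rw [List.isChain_append]
    refine ⟨c1, c2, ?_⟩
    intro x hx y hy
    rw [b1] at hx; rw [a2] at hy
    simp at hx hy; subst hx; subst hy; exact h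
  · rw [List.nodup_append]
    refine ⟨n1, n2, ?_⟩
    intro x hx y hy hxy
    subst hxy; exact hd x hx hy
  · simp [List.head?_append, a1]
  · simp [List.getLast?_append, b2]

theorem PL.reverse {G : SimpleGraph V} {l : List V} {a b : V}
    (h : PL G l a b) : PL G l.reverse b a := by
  obtain ⟨c1, n1, a1, b1⟩ := h
  refine ⟨?_, ?_, ?_, ?_⟩
  · rw [List.isChain_reverse]
    exact c1.imp (fun x y h => h.symm)
  · simpa using n1
  · simpa using b1
  · simpa using a1

theorem PL.single (G : SimpleGraph V) (a : V) : PL G [a] a a := by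
  simp [PL]

theorem PL.left_mem {G : SimpleGraph V} {l : List V} {a b : V}
    (h : PL G l a b) : a ∈ l := List.mem_of_mem_head? h.2.2.1

theorem PL.right_mem {G : SimpleGraph V} {l : List V} {a b : V}
    (h : PL G l a b) : b ∈ l := List.mem_of_mem_getLast? h.2.2.2

theorem PL.length_pos {G : SimpleGraph V} {l : List V} {a b : V}
    (h : PL G l a b) : 1 ≤ l.length := List.length_pos_of_mem h.left_mem

theorem PL.two_le {G : SimpleGraph V} {l : List V} {a b : V}
    (h : PL G l a b) (hab : a ≠ b) : 2 ≤ l.length := by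
  have h1 := h.left_mem
  have h2 := h.right_mem
  match l, h1, h2 with
  | [x], h1, h2 => simp at h1 h2; exact absurd (h1.trans h2.symm) hab
  | x :: y :: t, _, _ => simp

/-- A segment of a function on the integers. -/
def seg (c : ℤ → V) (i : ℤ) (d : ℕ) : List V := (List.range d).map fun k => c (i + (k : ℕ))

@[simp] theorem seg_length (c : ℤ → V) (i : ℤ) (d : ℕ) : (seg c i d).length = d := by simp [seg]

theorem mem_seg {c : ℤ → V} {i : ℤ} {d : ℕ} {v : V} :
    v ∈ seg c i d ↔ ∃ j : ℤ, i ≤ j ∧ j < i + d ∧ c j = v := by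
  simp only [seg, List.mem_map, List.mem_range]
  constructor
  · rintro ⟨k, hk, rfl⟩; exact ⟨i + k, by omega, by omega, rfl⟩
  · rintro ⟨j, h1, h2, rfl⟩
    refine ⟨(j - i).toNat, by omega, ?_⟩
    congr 1; omega

theorem seg_PL {G : SimpleGraph V} {c : ℤ → V} {i : ℤ} {d : ℕ} (hd : 1 ≤ d)
    (hadj : ∀ j, i ≤ j → j + 1 < i + d → G.Adj (c j) (c (j + 1)))
    (hinj : ∀ j k, i ≤ j → j < k → k < i + d → c j ≠ c k) {e : ℤ} (he : e = i + d - 1) :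
    PL G (seg c i d) (c i) (c e) := by
  refine ⟨?_, ?_, ?_, ?_⟩
  · rw [List.isChain_iff_getElem]
    intro k hk
    simp only [seg_length] at hk
    have := hadj (i + k) (by omega) (by omega)
    simp only [seg, List.getElem_map, List.getElem_range]
    convert this using 2
    push_cast; ring
  · unfold seg
    rw [List.nodup_map_iff_inj_on List.nodup_range]
    intro x hx y hy hxy
    simp only [List.mem_range] at hx hy
    rcases lt_trichotomy x y with h | h | h
    · exact absurd hxy (hinj _ _ (by omega) (by omega) (by omega))
    · exact h
    · exact absurd hxy.symm (hinj _ _ (by omega) (by omega) (by omega))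
  · obtain ⟨d, rfl⟩ : ∃ k, d = k + 1 := ⟨d - 1, by omega⟩
    simp [seg, List.range_succ_eq_map]
  · obtain ⟨d, rfl⟩ : ∃ k, d = k + 1 := ⟨d - 1, by omega⟩
    simp only [seg, List.range_succ, List.map_append, List.map_cons, List.map_nil]
    simp only [List.getLast?_append, List.getLast?_singleton, Option.some_or]
    congr 2; subst he; push_cast; ring

/-- A cycle of length `n`, as an `n`-periodic function on the integers. -/
structure IsCyc (G : SimpleGraph V) (c : ℤ → V) (n : ℕ) : Prop where
  three : 3 ≤ n
  inj : ∀ i j, c i = c j ↔ (n : ℤ) ∣ i - j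
  adj : ∀ i, G.Adj (c i) (c (i + 1))

namespace IsCyc
variable {G : SimpleGraph V} {c : ℤ → V} {n : ℕ}

theorem sep (h : IsCyc G c n) {a b : ℤ} (h1 : a < b) (h2 : b < a + n) : c a ≠ c b := by
  intro he
  have := (h.inj b a).1 he.symm
  have := Int.le_of_dvd (by omega) this
  omega

theorem per (h : IsCyc G c n) {a b : ℤ} (e : a = b + n) : c a = c b := by
  rw [h.inj]; subst e; simp

theorem segPL (h : IsCyc G c n) {i : ℤ} {d : ℕ} (h1 : 1 ≤ d) (h2 : d ≤ n) {e : ℤ}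
    (he : e = i + d - 1) : PL G (seg c i d) (c i) (c e) :=
  seg_PL h1 (fun j _ _ => h.adj j) (fun j k _ _ _ => h.sep (by omega) (by omega)) he

theorem seg_disj (h : IsCyc G c n) {i j : ℤ} {d e : ℕ} (h1 : i + d ≤ j) (h2 : j + e ≤ i + n) :
    ∀ x ∈ seg c i d, x ∉ seg c j e := by
  intro x hx hy
  obtain ⟨a, _, _, rfl⟩ := mem_seg.1 hx
  obtain ⟨b, _, _, hb⟩ := mem_seg.1 hy
  exact h.sep (a := a) (b := b) (by omega) (by omega) hb.symm

theorem seg_disj' (h : IsCyc G c n) {i j : ℤ} {d e : ℕ} (h1 : i + d ≤ j) (h2 : j + e ≤ i + n) :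
    ∀ x ∈ seg c j e, x ∉ seg c i d := fun x hx hy => h.seg_disj h1 h2 x hy hx

theorem rot (h : IsCyc G c n) (k : ℤ) : IsCyc G (fun i => c (i + k)) n where
  three := h.three
  inj i j := by rw [h.inj]; ring_nf
  adj i := by have := h.adj (i + k); convert this using 2; ring

theorem refl (h : IsCyc G c n) : IsCyc G (fun i => c (-i)) n where
  three := h.three
  inj i j := by
    rw [h.inj, ← dvd_neg]; ring_nf
  adj i := by have := (h.adj (-(i + 1))).symm; convert this using 2; ring

/-- every vertex of the cycle has an index in any window. -/
theorem window (h : IsCyc G c n) (i k : ℤ) : ∃ j, k ≤ j ∧ j < k + n ∧ c j = c i := by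
  have hn : (0 : ℤ) < n := by have := h.three; omega
  refine ⟨k + (i - k) % n, ?_, ?_, ?_⟩
  · have := Int.emod_nonneg (i - k) hn.ne'; omega
  · have := Int.emod_lt_of_pos (i - k) hn; omega
  · rw [h.inj]
    have := Int.emod_add_mul_ediv (i - k) n
    exact ⟨-((i - k) / n), by linarith⟩

end IsCyc

/-- Closed path list gives a cycle function. -/
theorem exists_cyc {G : SimpleGraph V} {l : List V} {a b : V} (h : PL G l a b) (hab : G.Adj b a)
    (h3 : 3 ≤ l.length) : ∃ c : ℤ → V, IsCyc G c l.length ∧ (∀ v, (∃ i, c i = v) ↔ v ∈ l) ∧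
      c 0 = a := by
  have hn : (0 : ℤ) < l.length := by omega
  have hlt : ∀ i : ℤ, (i % l.length).toNat < l.length := by
    intro i
    have := Int.emod_lt_of_pos i hn
    have := Int.emod_nonneg i hn.ne'
    omega
  refine ⟨fun i => l[(i % l.length).toNat]'(hlt i), ⟨h3, ?_, ?_⟩, ?_, ?_⟩
  · intro i j
    rw [h.2.1.getElem_inj_iff]
    have e1 := Int.emod_nonneg i hn.ne'
    have e2 := Int.emod_nonneg j hn.ne'
    constructor
    · intro he
      have : i % l.length = j % l.length := by omega
      exact Int.ModEq.dvd (Int.ModEq.symm this)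
    · intro hd
      have : j % l.length = i % l.length := (Int.modEq_iff_dvd).2 hd
      rw [this]
  · intro i
    have e1 := Int.emod_nonneg i hn.ne'
    have e2 := Int.emod_lt_of_pos i hn
    have e3 := Int.emod_nonneg (i+1) hn.ne'
    have e4 := Int.emod_lt_of_pos (i+1) hn
    have key : (i + 1) % l.length = (i % l.length + 1) % l.length := by
      rw [Int.emod_add_emod]
    by_cases hc : i % l.length + 1 = l.length
    · have k2 : (i + 1) % l.length = 0 := by rw [key, hc]; simp
      have hb : b = l[(i % l.length).toNat]'(hlt i) := by
        have := h.2.2.2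
        rw [List.getLast?_eq_getElem?] at this
        rw [List.getElem?_eq_getElem (by omega)] at this
        simp only [Option.some.injEq] at this
        rw [← this]; congr 1; omega
      have ha : a = l[((i+1) % l.length).toNat]'(hlt (i+1)) := by
        have := h.2.2.1
        rw [List.head?_eq_getElem?] at this
        rw [List.getElem?_eq_getElem (by omega)] at this
        simp only [Option.some.injEq] at this
        rw [← this]; congr 1; omega
      rw [← hb, ← ha]; exact hab
    · have k2 : (i + 1) % l.length = i % l.length + 1 := by
        rw [key]; exact Int.emod_eq_of_lt (by omega) (by omega)
      have := (List.isChain_iff_getElem.1 h.1) (i % l.length).toNat (by omega)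
      convert this using 2
      omega
  · intro v
    constructor
    · rintro ⟨i, rfl⟩; simp
    · intro hv
      obtain ⟨k, hk, rfl⟩ := List.getElem_of_mem hv
      refine ⟨k, ?_⟩
      have : (k : ℤ) % l.length = k := Int.emod_eq_of_lt (by omega) (by omega)
      simp [this]
  · have := h.2.2.1
    rw [List.head?_eq_getElem?] at this
    rw [List.getElem?_eq_getElem (by omega)] at this
    simpa using this

/-- A longest cycle. -/
structure LCyc (G : SimpleGraph V) (c : ℤ → V) (n : ℕ) : Prop extends IsCyc G c n where
  max : ∀ l a b, PL G l a b → G.Adj b a → l.length ≤ n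

namespace LCyc
variable {G : SimpleGraph V} {c : ℤ → V} {n : ℕ}

theorem rot (h : LCyc G c n) (k : ℤ) : LCyc G (fun i => c (i + k)) n :=
  ⟨h.toIsCyc.rot k, h.max⟩

theorem refl (h : LCyc G c n) : LCyc G (fun i => c (-i)) n :=
  ⟨h.toIsCyc.refl, h.max⟩

/-- Replace an arc by an outer path. -/
theorem T1 (h : LCyc G c n) {P : List V} {s t : V} (hP : PL G P s t)
    (hdis : ∀ v ∈ P, ∀ i, c i ≠ v) {i : ℤ} {d : ℕ} (h1 : 1 ≤ d) (h2 : d < n)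
    (ha : G.Adj (c i) s) (hb : G.Adj t (c (i + d))) : P.length + 1 ≤ d := by
  have hs := h.segPL (i := i + d) (d := n - d + 1) (by omega) (by omega) (e := i + n) (by omega)
  have := h.max _ _ _ (hP.append hs hb (by
    intro x hx hx'
    obtain ⟨j, _, _, hj⟩ := mem_seg.1 hx'
    exact hdis x hx j hj)) (by rw [h.per rfl]; exact ha)
  simp at this
  omega

theorem E1 (h : LCyc G c n) {P : List V} {s t : V} (hP : PL G P s t)
    (hdis : ∀ v ∈ P, ∀ i, c i ≠ v) {j k : ℕ} (h1 : 1 ≤ j) (h2 : j + 1 + k ≤ n)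
    (ha : G.Adj (c 0) s) (hb : G.Adj t (c j)) (hu : G.Adj (c 1) (c (j + 1 + k : ℕ))) :
    P.length ≤ k := by
  have s1 := (h.segPL (i := 1) (d := j) (by omega) (by omega) (e := j) (by omega)).reverse
  have s2 := h.segPL (i := (j + 1 + k : ℕ)) (d := n - j - k) (by omega) (by omega) (e := n)
    (by push_cast; omega)
  have hx := hP.append (s1.append s2 hu (by
    intro x hx
    exact h.seg_disj (by push_cast; omega) (by push_cast; omega) x (List.mem_reverse.1 hx))) hb (by
    intro x hx hx'
    simp only [List.mem_append, List.mem_reverse, mem_seg] at hx'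
    rcases hx' with ⟨j, _, _, hj⟩ | ⟨j, _, _, hj⟩ <;> exact hdis x hx j hj)
  have := h.max _ _ _ hx (by rw [h.per (a := n) (b := 0) (by simp)]; exact ha)
  simp at this
  omega

theorem E2 (h : LCyc G c n) {P : List V} {s t : V} (hP : PL G P s t)
    (hdis : ∀ v ∈ P, ∀ i, c i ≠ v) {j e : ℕ} (h1 : 1 ≤ j) (h2 : j + 1 ≤ e) (h3 : e < n)
    (ha : G.Adj (c 0) s) (hb : G.Adj t (c e)) (hu : G.Adj (c 1) (c (j + 1 : ℕ)))
    (hv : G.Adj (c j) (c (e + 1 : ℕ))) : False := by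
  have s1 := (h.segPL (i := (j + 1 : ℕ)) (d := e - j) (by omega) (by omega) (e := e)
    (by push_cast; omega)).reverse
  have s2 := h.segPL (i := 1) (d := j) (by omega) (by omega) (e := j) (by omega)
  have s3 := h.segPL (i := (e + 1 : ℕ)) (d := n - e) (by omega) (by omega) (e := n)
    (by push_cast; omega)
  have s23 := s2.append s3 hv (h.seg_disj (by push_cast; omega) (by push_cast; omega))
  have s123 := s1.append s23 hu.symm (by
    intro x hx hx'
    have hx := List.mem_reverse.1 hx
    rcases List.mem_append.1 hx' with h' | h'
    · exact h.seg_disj' (by push_cast; omega) (by push_cast; omega) x hx h'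
    · exact h.seg_disj (by push_cast; omega) (by push_cast; omega) x hx h')
  have hx := hP.append s123 hb (by
    intro x hx hx'
    simp only [List.mem_append, List.mem_reverse, mem_seg] at hx'
    rcases hx' with ⟨j, _, _, hj⟩ | ⟨j, _, _, hj⟩ | ⟨j, _, _, hj⟩ <;> exact hdis x hx j hj)
  have := h.max _ _ _ hx (by rw [h.per (a := n) (b := 0) (by simp)]; exact ha)
  have := hP.length_pos
  simp at *
  omega

theorem E3 (h : LCyc G c n) {P : List V} {s t : V} (hP : PL G P s t)
    (hdis : ∀ v ∈ P, ∀ i, c i ≠ v) {e : ℕ} (h1 : 1 ≤ e) (h3 : e < n)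
    (ha : G.Adj (c 0) s) (hb : G.Adj t (c e)) {w : V} (hw : w ∉ P) (hwc : ∀ i, c i ≠ w)
    (hu : G.Adj (c 1) w) (hv : G.Adj w (c (e + 1 : ℕ))) : False := by
  have s1 := (h.segPL (i := 1) (d := e) (by omega) (by omega) (e := e) (by omega)).reverse
  have s3 := h.segPL (i := (e + 1 : ℕ)) (d := n - e) (by omega) (by omega) (e := n)
    (by push_cast; omega)
  have s23 := (PL.single G w).append s3 hv (by
    intro x hx hx'
    simp only [List.mem_singleton] at hx; subst hx
    obtain ⟨j, _, _, hj⟩ := mem_seg.1 hx'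
    exact hwc j hj)
  have s123 := s1.append s23 hu (by
    intro x hx hx'
    have hx := List.mem_reverse.1 hx
    rcases List.mem_append.1 hx' with h' | h'
    · simp only [List.mem_singleton] at h'; subst h'
      obtain ⟨j, _, _, hj⟩ := mem_seg.1 hx
      exact hwc j hj
    · exact h.seg_disj (by push_cast; omega) (by push_cast; omega) x hx h')
  have hx := hP.append s123 hb (by
    intro x hx hx'
    simp only [List.mem_append, List.mem_reverse, mem_seg, List.mem_singleton] at hx'
    rcases hx' with ⟨j, _, _, hj⟩ | hj | ⟨j, _, _, hj⟩
    · exact hdis x hx j hj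
    · subst hj; exact hw hx
    · exact hdis x hx j hj)
  have := h.max _ _ _ hx (by rw [h.per (a := n) (b := 0) (by simp)]; exact ha)
  have := hP.length_pos
  simp at *
  omega

end LCyc
end NK

namespace NK

/-- A component `H` of the graph minus the cycle `c`. -/
structure Comp (G : SimpleGraph V) (c : ℤ → V) (H : Finset V) : Prop where
  conn : ∀ s ∈ H, ∀ t ∈ H, ∃ P, PL G P s t ∧ ∀ v ∈ P, v ∈ H
  closed : ∀ s ∈ H, ∀ w, G.Adj s w → w ∈ H ∨ ∃ i, c i = w
  disj : ∀ v ∈ H, ∀ i, c i ≠ v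

namespace Comp
variable {G : SimpleGraph V} {c : ℤ → V} {n : ℕ} {H : Finset V}

theorem rot (hH : Comp G c H) (k : ℤ) : Comp G (fun i => c (i + k)) H where
  conn := hH.conn
  closed s hs w hw := by
    rcases hH.closed s hs w hw with h | ⟨i, hi⟩
    · exact Or.inl h
    · exact Or.inr ⟨i - k, by simpa using hi⟩
  disj v hv i := hH.disj v hv _

theorem refl (hH : Comp G c H) : Comp G (fun i => c (-i)) H where
  conn := hH.conn
  closed s hs w hw := by
    rcases hH.closed s hs w hw with h | ⟨i, hi⟩
    · exact Or.inl h
    · exact Or.inr ⟨-i, by simpa using hi⟩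
  disj v hv i := hH.disj v hv _

theorem T1P (h : LCyc G c n) {P : List V} {s t : V} (hP : PL G P s t)
    (hdis : ∀ v ∈ P, ∀ i, c i ≠ v) {i j : ℤ} (h1 : i < j) (h2 : j < i + n)
    (ha : G.Adj (c i) s) (hb : G.Adj t (c j)) : (P.length : ℤ) + 1 ≤ j - i := by
  have := h.T1 hP hdis (i := i) (d := (j - i).toNat) (by omega) (by omega) ha
    (by convert hb using 2; omega)
  omega

theorem E1P (h : LCyc G c n) {P : List V} {s t : V} (hP : PL G P s t)
    (hdis : ∀ v ∈ P, ∀ i, c i ≠ v) {i z w : ℤ} (h1 : i < z) (h2 : z < w) (h3 : w ≤ i + n)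
    (ha : G.Adj (c i) s) (hb : G.Adj t (c z)) (hu : G.Adj (c (i + 1)) (c w)) :
    (P.length : ℤ) + z + 1 ≤ w := by
  have := (h.rot i).E1 hP (fun v hv k => hdis v hv _) (j := (z - i).toNat)
    (k := (w - z - 1).toNat) (by omega) (by omega) (by simpa using ha)
    (by convert hb using 2; omega) (by convert hu using 2 <;> push_cast <;> omega)
  omega

theorem t1 (h : LCyc G c n) (hH : Comp G c H) {s t : V} (hs : s ∈ H) (ht : t ∈ H)
    {i j : ℤ} (h1 : i < j) (h2 : j < i + n) (ha : G.Adj (c i) s) (hb : G.Adj t (c j)) :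
    i + 2 ≤ j ∧ (s ≠ t → i + 3 ≤ j) := by
  obtain ⟨P, hP, hPH⟩ := hH.conn s hs t ht
  have := T1P h hP (fun v hv => hH.disj v (hPH v hv)) h1 h2 ha hb
  have := hP.length_pos
  refine ⟨by omega, fun hne => ?_⟩
  have := hP.two_le hne
  omega

theorem e1 (h : LCyc G c n) (hH : Comp G c H) {s t : V} (hs : s ∈ H) (ht : t ∈ H)
    {i z : ℤ} (h1 : i < z) (h3 : z + 1 ≤ i + n) (ha : G.Adj (c i) s) (hb : G.Adj t (c z))
    (hu : G.Adj (c (i + 1)) (c (z + 1))) : False := by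
  obtain ⟨P, hP, hPH⟩ := hH.conn s hs t ht
  have := E1P h hP (fun v hv => hH.disj v (hPH v hv)) h1 (by omega) h3 ha hb hu
  have := hP.length_pos
  omega

theorem e1' (h : LCyc G c n) (hH : Comp G c H) {s t : V} (hs : s ∈ H) (ht : t ∈ H) (hst : s ≠ t)
    {i z : ℤ} (h1 : i < z) (h3 : z + 2 ≤ i + n) (ha : G.Adj (c i) s) (hb : G.Adj t (c z))
    (hu : G.Adj (c (i + 1)) (c (z + 2))) : False := by
  obtain ⟨P, hP, hPH⟩ := hH.conn s hs t ht
  have := E1P h hP (fun v hv => hH.disj v (hPH v hv)) h1 (by omega) h3 ha hb hu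
  have := hP.two_le hst
  omega

theorem e2 (h : LCyc G c n) (hH : Comp G c H) {s t : V} (hs : s ∈ H) (ht : t ∈ H)
    {i z j : ℤ} (h1 : i < z) (h2 : z < j) (h3 : j < i + n)
    (ha : G.Adj (c i) s) (hb : G.Adj t (c j))
    (hu : G.Adj (c (i + 1)) (c (z + 1))) (hv : G.Adj (c z) (c (j + 1))) : False := by
  obtain ⟨P, hP, hPH⟩ := hH.conn s hs t ht
  exact (h.rot i).E2 hP (fun v hv k => hH.disj v (hPH v hv) _) (j := (z - i).toNat)
    (e := (j - i).toNat) (by omega) (by omega) (by omega) (by simpa using ha)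
    (by convert hb using 2; omega) (by convert hu using 2 <;> push_cast <;> omega)
    (by convert hv using 2 <;> push_cast <;> omega)

theorem e3 (h : LCyc G c n) (hH : Comp G c H) {s t : V} (hs : s ∈ H) (ht : t ∈ H)
    {i j : ℤ} (h1 : i < j) (h3 : j < i + n)
    (ha : G.Adj (c i) s) (hb : G.Adj t (c j)) {w : V} (hw : w ∉ H) (hwc : ∀ k, c k ≠ w)
    (hu : G.Adj (c (i + 1)) w) (hv : G.Adj w (c (j + 1))) : False := by
  obtain ⟨P, hP, hPH⟩ := hH.conn s hs t ht
  exact (h.rot i).E3 hP (fun v hv k => hH.disj v (hPH v hv) _)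
    (e := (j - i).toNat) (by omega) (by omega) (by simpa using ha)
    (by convert hb using 2; omega) (w := w) (fun hx => hw (hPH w hx)) (fun k => hwc _)
    (by convert hu using 2; omega)
    (by convert hv using 2; push_cast; omega)

/-- successors of two neighbours of `H` are not adjacent. -/
theorem e0 (h : LCyc G c n) (hH : Comp G c H) {s t : V} (hs : s ∈ H) (ht : t ∈ H)
    {i j : ℤ} (h1 : i < j) (h3 : j < i + n)
    (ha : G.Adj (c i) s) (hb : G.Adj t (c j)) : ¬ G.Adj (c (i + 1)) (c (j + 1)) := by
  intro hu
  exact e1 h hH hs ht h1 (by omega) ha hb hu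

end Comp

/-- vertex set of the cycle -/
def Cset [DecidableEq V] (c : ℤ → V) (n : ℕ) : Finset V :=
  (Finset.Icc 1 n).image (fun k : ℕ => c (k : ℤ))

section
variable [DecidableEq V] {G : SimpleGraph V} {c : ℤ → V} {n : ℕ} {H : Finset V}

theorem mem_Cset (h : IsCyc G c n) {v : V} : v ∈ Cset c n ↔ ∃ i, c i = v := by
  simp only [Cset, Finset.mem_image, Finset.mem_Icc]
  constructor
  · rintro ⟨k, _, rfl⟩; exact ⟨k, rfl⟩
  · rintro ⟨i, rfl⟩
    obtain ⟨j, h1, h2, h3⟩ := h.window i 1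
    exact ⟨j.toNat, by omega, by rw [← h3]; congr 1; omega⟩

theorem pos_card (h : IsCyc G c n) (F : Finset V) :
    ((Finset.Icc 1 n).filter (fun k : ℕ => c (k : ℤ) ∈ F)).card = (F ∩ Cset c n).card := by
  rw [← Finset.card_image_of_injOn (f := fun k : ℕ => c (k : ℤ))]
  · congr 1
    ext v
    simp only [Finset.mem_image, Finset.mem_filter, Finset.mem_inter, Cset]
    constructor
    · rintro ⟨k, ⟨hk, hF⟩, rfl⟩; exact ⟨hF, k, hk, rfl⟩
    · rintro ⟨hF, k, hk, rfl⟩; exact ⟨k, ⟨hk, hF⟩, rfl⟩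
  · intro a ha b hb hab
    simp only [Finset.coe_filter, Finset.mem_Icc, Set.mem_setOf_eq] at ha hb
    by_contra hne
    rcases Nat.lt_or_gt_of_ne hne with hl | hl
    · exact h.sep (a := a) (b := b) (by omega) (by omega) hab
    · exact h.sep (a := b) (b := a) (by omega) (by omega) hab.symm

theorem card_Cset (h : IsCyc G c n) : (Cset c n).card = n := by
  have := pos_card h (Cset c n)
  rw [Finset.inter_self] at this
  rw [← this, Finset.filter_true_of_mem]
  · simp
  · intro k _; exact (mem_Cset h).2 ⟨_, rfl⟩

theorem shift_card (s : Finset ℕ) (h : ∀ k ∈ s, 1 ≤ k) : (s.image (· - 1)).card = s.card := by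
  apply Finset.card_image_of_injOn
  intro a ha b hb hab
  have := h a ha
  have := h b hb
  simp only at hab
  omega

theorem count6 {n : ℕ} {A B C D E F : Finset ℕ}
    (hA : A ⊆ Finset.Icc 1 n) (hB : B ⊆ Finset.Icc 1 n) (hC : C ⊆ Finset.Icc 1 n)
    (hD : D ⊆ Finset.Icc 1 n) (hE : E ⊆ Finset.Icc 1 n) (hF : F ⊆ Finset.Icc 1 n)
    (ab : Disjoint A B) (ac : Disjoint A C) (ad : Disjoint A D) (ae : Disjoint A E)
    (af : Disjoint A F) (bc : Disjoint B C) (bd : Disjoint B D) (be : Disjoint B E)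
    (bf : Disjoint B F) (cd : Disjoint C D) (ce : Disjoint C E) (cf : Disjoint C F)
    (de : Disjoint D E) (df : Disjoint D F) (ef : Disjoint E F) :
    A.card + B.card + C.card + D.card + E.card + F.card ≤ n := by
  have h1 : (A ∪ B ∪ C ∪ D ∪ E ∪ F) ⊆ Finset.Icc 1 n := by
    simp only [Finset.union_subset_iff]; tauto
  have h2 := Finset.card_le_card h1
  rw [Finset.card_union_of_disjoint, Finset.card_union_of_disjoint, Finset.card_union_of_disjoint,
    Finset.card_union_of_disjoint, Finset.card_union_of_disjoint] at h2
  · simpa using h2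
  all_goals first | assumption | (simp only [Finset.disjoint_union_left]; tauto)

/-- The main counting lemma on the cycle, base position `0`. -/
theorem key_core [DecidableRel G.Adj] [Fintype V] (h : LCyc G c n) (hH : Comp G c H) {x s t : V}
    (hx : x ∈ H) (hs : s ∈ H) (ht : t ∈ H) (hxs : s ≠ x) (hxt : t ≠ x) {e : ℕ} (he1 : 1 ≤ e)
    (hen : e < n) (ha : G.Adj (c 0) s) (hb : G.Adj t (c e)) (Y S : Finset V)
    (hY : ∀ v ∈ Y, ∃ y ∈ H, G.Adj y v)
    (hYS : ∀ v ∈ Y, G.Adj (c 1) v ∨ G.Adj (c (e + 1)) v → v ∈ S) :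
    (G.neighborFinset x ∩ Cset c n).card + (Y ∩ Cset c n).card +
      (G.neighborFinset (c 1) ∩ Cset c n).card +
      (G.neighborFinset (c (e + 1)) ∩ Cset c n).card ≤ n + 2 + S.card := by
  have h0 : c (n : ℤ) = c 0 := h.per (by simp)
  have hpn : ∀ k : ℤ, c (k + n) = c k := fun k => h.per rfl
  have ha' : G.Adj (c n) s := by rw [h0]; exact ha
  have e2 : 2 ≤ e := by
    have := (hH.t1 h hs ht (i := 0) (j := e) (by omega) (by omega) ha hb).1; omega
  have en2 : e + 2 ≤ n := by
    have := (hH.t1 h ht hs (i := e) (j := n) (by omega) (by omega) hb.symm ha'.symm).1; omega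
  have fU : ∀ y ∈ H, ∀ k : ℕ, 1 ≤ k → k + 1 ≤ n → G.Adj y (c k) → ¬ G.Adj (c 1) (c (k + 1)) := by
    intro y hy k h1 h2 h3 h4
    exact hH.e1 h hs hy (i := 0) (z := k) (by omega) (by omega) ha h3 (by simpa using h4)
  have fW : ∀ y ∈ H, ∀ k : ℕ, e + 1 ≤ k → k + 1 ≤ n → G.Adj y (c k) →
      ¬ G.Adj (c (e + 1)) (c (k + 1)) := by
    intro y hy k h1 h2 h3 h4
    exact hH.e1 h ht hy (i := e) (z := k) (by omega) (by omega) hb.symm h3 h4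
  have fXU1 : ∀ k : ℕ, 1 ≤ k → k + 2 ≤ n → G.Adj x (c k) → ¬ G.Adj (c 1) (c (k + 2)) := by
    intro k h1 h2 h3 h4
    exact hH.e1' h hs hx hxs (i := 0) (z := k) (by omega) (by omega) ha h3 (by simpa using h4)
  have fXW1 : ∀ k : ℕ, e + 1 ≤ k → k + 2 ≤ n → G.Adj x (c k) →
      ¬ G.Adj (c (e + 1)) (c (k + 2)) := by
    intro k h1 h2 h3 h4
    exact hH.e1' h ht hx hxt (i := e) (z := k) (by omega) (by omega) hb.symm h3 h4
  have fXW0 : ∀ k : ℕ, 1 ≤ k → k + 1 ≤ e → G.Adj x (c k) → ¬ G.Adj (c (e + 1)) (c (k + 1)) := by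
    intro k h1 h2 h3 h4
    refine hH.e1 h ht hx (i := e) (z := k + n) (by omega) (by omega) hb.symm ?_ ?_
    · rw [hpn]; exact h3
    · rw [add_right_comm, hpn]; exact h4
  have fUW : ∀ k : ℕ, 1 ≤ k → k + 1 ≤ e → G.Adj (c 1) (c (k + 1)) →
      ¬ G.Adj (c (e + 1)) (c k) := by
    intro k h1 h2 h3 h4
    exact hH.e2 h hs ht (i := 0) (z := k) (j := e) (by omega) (by omega) (by omega) ha hb
      (by simpa using h3) h4.symm
  have fWU : ∀ k : ℕ, e + 1 ≤ k → k + 1 ≤ n → G.Adj (c (e + 1)) (c (k + 1)) →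
      ¬ G.Adj (c 1) (c k) := by
    intro k h1 h2 h3 h4
    refine hH.e2 h ht hs (i := e) (z := k) (j := n) (by omega) (by omega) (by omega) hb.symm
      ha'.symm h3 ?_
    rw [add_comm, hpn]; exact h4.symm
  have fXY : ∀ k : ℕ, 1 ≤ k → k + 1 ≤ n → G.Adj x (c k) → c (k + 1) ∉ Y := by
    intro k h1 h2 h3 h4
    obtain ⟨y, hy, hy'⟩ := hY _ h4
    have := (hH.t1 h hx hy (i := k) (j := k + 1) (by omega) (by omega) h3.symm hy').1
    omega
  rw [← pos_card h.toIsCyc, ← pos_card h.toIsCyc, ← pos_card h.toIsCyc, ← pos_card h.toIsCyc]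
  simp only [mem_neighborFinset]
  set X := (Finset.Icc 1 n).filter (fun k : ℕ => G.Adj x (c k)) with hX
  set U := (Finset.Icc 1 n).filter (fun k : ℕ => G.Adj (c 1) (c k)) with hU
  set W := (Finset.Icc 1 n).filter (fun k : ℕ => G.Adj (c (e + 1)) (c k)) with hW
  set Z := (Finset.Icc 1 n).filter (fun k : ℕ => c k ∈ Y) with hZ
  have mX : ∀ k, k ∈ X ↔ (1 ≤ k ∧ k ≤ n) ∧ G.Adj x (c k) := by intro k; simp [hX]
  have mU : ∀ k, k ∈ U ↔ (1 ≤ k ∧ k ≤ n) ∧ G.Adj (c 1) (c k) := by intro k; simp [hU]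
  have mW : ∀ k, k ∈ W ↔ (1 ≤ k ∧ k ≤ n) ∧ G.Adj (c (e + 1)) (c k) := by intro k; simp [hW]
  have mZ : ∀ k, k ∈ Z ↔ (1 ≤ k ∧ k ≤ n) ∧ c k ∈ Y := by intro k; simp [hZ]
  have nU : 1 ∉ U := by rw [mU]; rintro ⟨_, hh⟩; simp at hh
  have nW : e + 1 ∉ W := by
    rw [mW]; rintro ⟨_, hh⟩; simp at hh
  have cX : X.card ≤ (((X.erase n).erase e).image (· + 1)).card + 2 := by
    rw [Finset.card_image_of_injective _ (add_left_injective 1)]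
    have := Finset.pred_card_le_card_erase (s := X) (a := n)
    have := Finset.pred_card_le_card_erase (s := X.erase n) (a := e)
    omega
  have cU : U.card = ((U.filter (· ≤ e)).image (· - 1)).card + (U.filter (¬ · ≤ e)).card := by
    rw [shift_card _ (by intro k hk; simp [mU] at hk; omega), Finset.card_filter_add_card_filter_not]
  have cW : W.card = (W.filter (· ≤ e)).card + ((W.filter (¬ · ≤ e)).image (· - 1)).card := by
    rw [shift_card _ (by intro k hk; simp [mW] at hk; omega), Finset.card_filter_add_card_filter_not]
  set O := W.filter (· ≤ e) ∪ U.filter (¬ · ≤ e) with hO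
  have cZ : Z.card ≤ (Z \ O).card + S.card := by
    have h1 := Finset.card_sdiff_add_card_inter Z O
    have h2 : (Z ∩ O).card ≤ S.card := by
      apply Finset.card_le_card_of_injOn (fun k : ℕ => c (k : ℤ))
      · intro k hk
        simp only [hO, Finset.coe_inter, Set.mem_inter_iff, Finset.mem_coe, mZ, Finset.mem_union,
          Finset.mem_filter, mW, mU] at hk
        apply hYS _ hk.1.2
        rcases hk.2 with hk | hk
        · exact Or.inr hk.1.2
        · exact Or.inl hk.1.2
      · intro a ha b hb hab
        simp only [Finset.coe_inter, Set.mem_inter_iff, Finset.mem_coe, mZ] at ha hb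
        by_contra hne
        rcases Nat.lt_or_gt_of_ne hne with hl | hl
        · exact h.sep (a := a) (b := b) (by omega) (by omega) hab
        · exact h.sep (a := b) (b := a) (by omega) (by omega) hab.symm
    omega
  have key := count6 (n := n) (A := ((X.erase n).erase e).image (· + 1))
    (B := (U.filter (· ≤ e)).image (· - 1)) (C := W.filter (· ≤ e))
    (D := (W.filter (¬ · ≤ e)).image (· - 1)) (E := U.filter (¬ · ≤ e)) (F := Z \ O)
    ?_ ?_ ?_ ?_ ?_ ?_ ?_ ?_ ?_ ?_ ?_ ?_ ?_ ?_ ?_ ?_ ?_ ?_ ?_ ?_ ?_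
  · omega
  all_goals
    first
    | (intro k hk
       simp only [Finset.mem_image, Finset.mem_erase, Finset.mem_filter, Finset.mem_sdiff,
         mX, mU, mW, mZ, Finset.mem_Icc] at hk ⊢)
    | (rw [Finset.disjoint_left]
       intro k hk hk'
       simp only [hO, Finset.mem_image, Finset.mem_erase, Finset.mem_filter, Finset.mem_sdiff,
         Finset.mem_union, mX, mU, mW, mZ, Finset.mem_Icc] at hk hk')
  · obtain ⟨a, h1, rfl⟩ := hk; omega
  · obtain ⟨a, h1, rfl⟩ := hk
    have : a ≠ 1 := by rintro rfl; exact nU ((mU 1).2 h1.1)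
    omega
  · omega
  · obtain ⟨a, h1, rfl⟩ := hk; omega
  · omega
  · omega
  · skip
    obtain ⟨a, h1, rfl⟩ := hk
    obtain ⟨b, h2, hb2⟩ := hk'
    obtain rfl : b = a + 2 := by omega
    exact fXU1 a (by omega) (by omega) h1.2.2.2 (by exact_mod_cast h2.1.2)
  · skip
    obtain ⟨a, h1, rfl⟩ := hk
    exact fXW0 a (by omega) (by omega) h1.2.2.2 (by exact_mod_cast hk'.1.2)
  · skip
    obtain ⟨a, h1, rfl⟩ := hk
    obtain ⟨b, h2, hb2⟩ := hk'
    have : b ≠ e + 1 := by rintro rfl; exact nW ((mW _).2 h2.1)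
    obtain rfl : b = a + 2 := by omega
    exact fXW1 a (by omega) (by omega) h1.2.2.2 (by exact_mod_cast h2.1.2)
  · skip
    obtain ⟨a, h1, rfl⟩ := hk
    exact fU x hx a (by omega) (by omega) h1.2.2.2 (by exact_mod_cast hk'.1.2)
  · skip
    obtain ⟨a, h1, rfl⟩ := hk
    exact fXY a (by omega) (by omega) h1.2.2.2 (by exact_mod_cast hk'.1.2)
  · skip
    obtain ⟨a, h1, rfl⟩ := hk
    have : a ≠ 1 := by rintro rfl; exact nU ((mU 1).2 h1.1)
    obtain ⟨b, rfl⟩ : ∃ b, a = b + 1 := ⟨a - 1, by omega⟩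
    simp only [Nat.add_sub_cancel] at hk'
    exact fUW b (by omega) (by omega) (by exact_mod_cast h1.1.2) hk'.1.2
  · obtain ⟨a, h1, rfl⟩ := hk
    obtain ⟨b, h2, hb2⟩ := hk'
    have : b ≠ e + 1 := by rintro rfl; exact nW ((mW _).2 h2.1)
    omega
  · obtain ⟨a, h1, rfl⟩ := hk
    omega
  · obtain ⟨a, h1, rfl⟩ := hk
    have : a ≠ 1 := by rintro rfl; exact nU ((mU 1).2 h1.1)
    obtain ⟨b, rfl⟩ : ∃ b, a = b + 1 := ⟨a - 1, by omega⟩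
    simp only [Nat.add_sub_cancel] at hk'
    obtain ⟨y, hy, hy'⟩ := hY _ hk'.1.2
    exact fU y hy b (by omega) (by omega) hy' (by exact_mod_cast h1.1.2)
  · obtain ⟨b, h2, hb2⟩ := hk'
    have : b ≠ e + 1 := by rintro rfl; exact nW ((mW _).2 h2.1)
    omega
  · omega
  · exact hk'.2 (Or.inl hk)
  · obtain ⟨a, h1, rfl⟩ := hk
    have : a ≠ e + 1 := by rintro rfl; exact nW ((mW _).2 h1.1)
    obtain ⟨b, rfl⟩ : ∃ b, a = b + 1 := ⟨a - 1, by omega⟩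
    simp only [Nat.add_sub_cancel] at hk'
    exact fWU b (by omega) (by omega) (by exact_mod_cast h1.1.2) hk'.1.2
  · obtain ⟨a, h1, rfl⟩ := hk
    have : a ≠ e + 1 := by rintro rfl; exact nW ((mW _).2 h1.1)
    obtain ⟨b, rfl⟩ : ∃ b, a = b + 1 := ⟨a - 1, by omega⟩
    simp only [Nat.add_sub_cancel] at hk'
    obtain ⟨y, hy, hy'⟩ := hY _ hk'.1.2
    exact fW y hy b (by omega) (by omega) hy' (by exact_mod_cast h1.1.2)
  · exact hk'.2 (Or.inr hk)

end
end NK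

namespace NK

/-- cut property following from 3-connectivity -/
def Cut3 [DecidableEq V] (G : SimpleGraph V) : Prop :=
  ∀ (T A : Finset V), T.card ≤ 2 → (∃ p ∈ A, p ∉ T) → (∃ q, q ∉ A ∧ q ∉ T) →
    ∃ p q, p ∈ A ∧ q ∉ A ∧ p ∉ T ∧ q ∉ T ∧ G.Adj p q

section
variable [DecidableEq V] {G : SimpleGraph V} {c : ℤ → V} {n : ℕ} {H : Finset V}

theorem Cset_rot (h : IsCyc G c n) (k : ℤ) : Cset (fun i => c (i + k)) n = Cset c n := by
  ext v
  rw [mem_Cset (h.rot k), mem_Cset h]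
  constructor
  · rintro ⟨i, rfl⟩; exact ⟨_, rfl⟩
  · rintro ⟨i, rfl⟩; exact ⟨i - k, by simp⟩

theorem Cset_refl (h : IsCyc G c n) : Cset (fun i => c (-i)) n = Cset c n := by
  ext v
  rw [mem_Cset h.refl, mem_Cset h]
  constructor
  · rintro ⟨i, rfl⟩; exact ⟨_, rfl⟩
  · rintro ⟨i, rfl⟩; exact ⟨-i, by simp⟩

theorem Comp.disjoint_Cset (hH : Comp G c H) (h : IsCyc G c n) : Disjoint H (Cset c n) := by
  rw [Finset.disjoint_left]
  intro v hv hc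
  obtain ⟨i, hi⟩ := (mem_Cset h).1 hc
  exact hH.disj v hv i hi

theorem attach2 (hcut : Cut3 G) (h : LCyc G c n) (hH : Comp G c H) (y : V)
    (hy : ∃ p ∈ H, p ≠ y) : ∃ (i j : ℤ) (s t : V), i < j ∧ j < i + n ∧ s ∈ H ∧ t ∈ H ∧ s ≠ y ∧ t ≠ y ∧
      G.Adj (c i) s ∧ G.Adj t (c j) := by
  have hn := h.three
  obtain ⟨p0, hp0, hp0y⟩ := hy
  have key : ∀ k : ℤ, ∃ p q, p ∈ H ∧ p ≠ y ∧ G.Adj p q ∧ q ≠ c k ∧ ∃ i, c i = q := by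
    intro k
    have hq : ∃ q, q ∉ H ∧ q ∉ ({y, c k} : Finset V) := by
      by_cases hk : c (k + 1) = y
      · refine ⟨c (k + 2), fun hh => hH.disj _ hh _ rfl, ?_⟩
        have h1 := h.sep (a := k) (b := k + 2) (by omega) (by omega)
        have h2 := h.sep (a := k + 1) (b := k + 2) (by omega) (by omega)
        simp [← hk, h1.symm, h2.symm]
      · refine ⟨c (k + 1), fun hh => hH.disj _ hh _ rfl, ?_⟩
        have h1 := h.sep (a := k) (b := k + 1) (by omega) (by omega)
        simp [hk, h1.symm]
    obtain ⟨p, q, hp, hq, hp', hq', hpq⟩ := hcut {y, c k} H Finset.card_le_two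
      ⟨p0, hp0, by simp [hp0y, (hH.disj p0 hp0 k).symm]⟩ hq
    simp only [Finset.mem_insert, Finset.mem_singleton, not_or] at hp' hq'
    exact ⟨p, q, hp, hp'.1, hpq, hq'.2, (hH.closed p hp q hpq).resolve_left hq⟩
  obtain ⟨p, q, hp, hpy, hpq, -, i, rfl⟩ := key 0
  obtain ⟨p', q', hp', hpy', hpq', hne, j, rfl⟩ := key i
  obtain ⟨j', h1, h2, h3⟩ := h.window j i
  have : j' ≠ i := by rintro rfl; exact hne h3.symm
  exact ⟨i, j', p, p', by omega, h2, hp, hp', hpy, hpy', hpq.symm, by rw [h3]; exact hpq'⟩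

variable [DecidableRel G.Adj] [Fintype V]

theorem Comp.nbr_sdiff (hH : Comp G c H) (h : IsCyc G c n) {x : V} (hx : x ∈ H) :
    G.neighborFinset x \ H = G.neighborFinset x ∩ Cset c n := by
  ext v
  simp only [Finset.mem_sdiff, Finset.mem_inter, mem_neighborFinset]
  constructor
  · rintro ⟨h1, h2⟩
    exact ⟨h1, (mem_Cset h).2 ((hH.closed x hx v h1).resolve_left h2)⟩
  · rintro ⟨h1, h2⟩
    exact ⟨h1, fun h3 => Finset.disjoint_left.1 (hH.disjoint_Cset h) h3 h2⟩

theorem key4 (h : LCyc G c n) (hH : Comp G c H) {x s t : V}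
    (hx : x ∈ H) (hs : s ∈ H) (ht : t ∈ H) (hxs : s ≠ x) (hxt : t ≠ x) {i j : ℤ} (hij : i < j)
    (hjn : j < i + n) (ha : G.Adj (c i) s) (hb : G.Adj t (c j)) (Y S : Finset V)
    (hY : ∀ v ∈ Y, ∃ y ∈ H, G.Adj y v) (hYc : Y ⊆ Cset c n)
    (hYS : ∀ v ∈ Y, G.Adj (c (i + 1)) v ∨ G.Adj (c (j + 1)) v → v ∈ S) :
    (G.neighborFinset x \ H).card + Y.card + G.degree (c (i + 1)) + G.degree (c (j + 1))
      + H.card ≤ Fintype.card V + 2 + S.card := by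
  have f1 : (1 + i : ℤ) = i + 1 := by ring
  have f2 : (((j - i).toNat : ℤ) + 1 + i) = j + 1 := by omega
  have key := key_core (h.rot i) (hH.rot i) hx hs ht hxs hxt (e := (j - i).toNat) (by omega)
    (by omega) (by simpa using ha) (by convert hb using 2; omega) Y S hY (by
      intro v hv hv'
      apply hYS v hv
      simpa only [f1, f2] using hv')
  rw [Cset_rot h.toIsCyc] at key
  rw [f1, f2] at key
  rw [hH.nbr_sdiff h.toIsCyc hx]
  rw [Finset.inter_eq_left.2 hYc] at key
  have d1 : ∀ u, G.degree u = (G.neighborFinset u ∩ Cset c n).card +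
      (G.neighborFinset u \ Cset c n).card := by
    intro u
    rw [← card_neighborFinset_eq_degree, Finset.card_inter_add_card_sdiff]
  rw [d1 (c (i + 1)), d1 (c (j + 1))]
  have nH : ∀ k : ℤ, ∀ s ∈ H, G.Adj (c k) s → ∀ y ∈ H, ¬ G.Adj (c (k + 1)) y := by
    intro k s hs hks y hy hk
    have := (hH.t1 h hs hy (i := k) (j := k + 1) (by omega) (by have := h.three; omega) hks
      hk.symm).1
    omega
  have big : (Cset c n).card + H.card + (G.neighborFinset (c (i + 1)) \ Cset c n).card +
      (G.neighborFinset (c (j + 1)) \ Cset c n).card ≤ Fintype.card V := by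
    rw [← Finset.card_union_of_disjoint, ← Finset.card_union_of_disjoint,
      ← Finset.card_union_of_disjoint]
    · exact Finset.card_le_univ _
    · rw [Finset.disjoint_left]
      intro v hv hv'
      simp only [Finset.mem_union, Finset.mem_sdiff, mem_neighborFinset] at hv hv'
      rcases hv with (hv | hv) | hv
      · exact hv'.2 hv
      · exact nH j t ht hb.symm v hv hv'.1
      · refine hH.e3 h hs ht hij hjn ha hb (w := v) ?_ ?_ hv.1 hv'.1.symm
        · intro hv3; exact nH j t ht hb.symm v hv3 hv'.1
        · intro k hk; exact hv.2 ((mem_Cset h.toIsCyc).2 ⟨k, hk⟩)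
    · rw [Finset.disjoint_left]
      intro v hv hv'
      simp only [Finset.mem_union, Finset.mem_sdiff, mem_neighborFinset] at hv hv'
      rcases hv with hv | hv
      · exact hv'.2 hv
      · exact nH i s hs ha v hv hv'.1
    · exact (hH.disjoint_Cset h.toIsCyc).symm
  rw [card_Cset h.toIsCyc] at big
  omega

theorem F2 (hcut : Cut3 G) (h : LCyc G c n) (hH : Comp G c H) {δ : ℕ} (hδ : ∀ v, δ ≤ G.degree v)
    (h2 : 2 ≤ H.card) {y : V} (hy : y ∈ H) :
    (G.neighborFinset y \ H).card + 2 * δ + H.card ≤ Fintype.card V + 2 := by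
  obtain ⟨p, hp, hpy⟩ := Finset.exists_mem_ne h2 y
  obtain ⟨i, j, s, t, h1, h2, hs, ht, hsy, hty, ha, hb⟩ := attach2 hcut h hH y ⟨p, hp, hpy⟩
  have := key4 h hH hy hs ht hsy hty h1 h2 ha hb ∅ ∅ (by simp) (by simp) (by simp)
  have := hδ (c (i + 1))
  have := hδ (c (j + 1))
  simp at *
  omega

end
end NK

namespace NK

/-- `i + d` is the next index after `i` whose vertex is in `M` -/
def Nxt (c : ℤ → V) (M : Finset V) (i : ℤ) (d : ℕ) : Prop :=
  1 ≤ d ∧ c (i + d) ∈ M ∧ ∀ e : ℕ, 1 ≤ e → e < d → c (i + e) ∉ M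

section
variable {G : SimpleGraph V} {c : ℤ → V} {n : ℕ} {H M : Finset V}

theorem Nxt.unique {i : ℤ} {d d' : ℕ} (h : Nxt c M i d) (h' : Nxt c M i d') : d = d' := by
  rcases lt_trichotomy d d' with hl | hl | hl
  · exact absurd h.2.1 (h'.2.2 d h.1 hl)
  · exact hl
  · exact absurd h'.2.1 (h.2.2 d' h'.1 hl)

theorem IsCyc.add_eq (h : IsCyc G c n) {i j : ℤ} (e : c i = c j) (k : ℤ) :
    c (i + k) = c (j + k) := by
  rw [h.inj] at e ⊢
  convert e using 1; ring

theorem Nxt.congr (h : IsCyc G c n) {i j : ℤ} (e : c i = c j) {d : ℕ} (hN : Nxt c M i d) :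
    Nxt c M j d := by
  refine ⟨hN.1, ?_, ?_⟩
  · rw [← h.add_eq e]; exact hN.2.1
  · intro k h1 h2; rw [← h.add_eq e]; exact hN.2.2 k h1 h2

theorem exists_nxt (h : IsCyc G c n) (i : ℤ) (hex : ∃ j, c j ∈ M) :
    ∃ d : ℕ, Nxt c M i d ∧ d ≤ n := by
  classical
  obtain ⟨j, hj⟩ := hex
  obtain ⟨k, h1, h2, h3⟩ := h.window j (i + 1)
  have hex : ∃ d : ℕ, 1 ≤ d ∧ c (i + d) ∈ M := by
    refine ⟨(k - i).toNat, by omega, ?_⟩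
    rw [show i + ((k - i).toNat : ℤ) = k by omega, h3]; exact hj
  refine ⟨Nat.find hex, ⟨(Nat.find_spec hex).1, (Nat.find_spec hex).2, ?_⟩, ?_⟩
  · intro e h1 h2 h3
    exact Nat.find_min hex h2 ⟨h1, h3⟩
  · refine (Nat.find_min' hex (m := (k - i).toNat) ⟨by omega, ?_⟩).trans (by omega)
    rw [show i + ((k - i).toNat : ℤ) = k by omega, h3]; exact hj

theorem Nxt.lt [DecidableEq V] (h : IsCyc G c n) {i : ℤ} {d : ℕ} (hM : M ⊆ Cset c n) (h2 : 2 ≤ M.card)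
    (hN : Nxt c M i d) : d < n := by
  by_contra hd
  obtain ⟨v, hv, hne⟩ := Finset.exists_mem_ne h2 (c i)
  obtain ⟨j, rfl⟩ := (mem_Cset h).1 (hM hv)
  obtain ⟨k, h1, h2, h3⟩ := h.window j i
  have : k ≠ i := by rintro rfl; exact hne h3.symm
  apply hN.2.2 (k - i).toNat (by omega) (by omega)
  rw [show i + ((k - i).toNat : ℤ) = k by omega, h3]; exact hv

theorem gap_sum [DecidableEq V] (h : IsCyc G c n) (hM : M ⊆ Cset c n) (f : V → ℕ)
    (hf : ∀ (i : ℤ) (d : ℕ), c i ∈ M → Nxt c M i d → f (c i) ≤ d) : ∑ m ∈ M, f m ≤ n := by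
  have hidx : ∀ m : V, ∃ i : ℤ, m ∈ M → c i = m := by
    intro m
    by_cases hm : m ∈ M
    · obtain ⟨i, hi⟩ := (mem_Cset h).1 (hM hm); exact ⟨i, fun _ => hi⟩
    · exact ⟨0, fun hh => absurd hh hm⟩
  choose idx hidx using hidx
  have hg : ∀ m : V, ∃ d : ℕ, m ∈ M → Nxt c M (idx m) d := by
    intro m
    by_cases hm : m ∈ M
    · obtain ⟨d, hd, _⟩ := exists_nxt (M := M) h (idx m) ⟨idx m, by rw [hidx m hm]; exact hm⟩
      exact ⟨d, fun _ => hd⟩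
    · exact ⟨0, fun hh => absurd hh hm⟩
  choose g hg using hg
  calc ∑ m ∈ M, f m ≤ ∑ m ∈ M, g m := by
        apply Finset.sum_le_sum
        intro m hm
        have := hf (idx m) (g m) (by rw [hidx m hm]; exact hm) (hg m hm)
        rwa [hidx m hm] at this
    _ = (M.sigma fun m => Finset.range (g m)).card := by simp
    _ ≤ (Cset c n).card := by
        apply Finset.card_le_card_of_injOn (fun p => c (idx p.1 + p.2))
        · intro p _; exact (mem_Cset h).2 ⟨_, rfl⟩
        · have key : ∀ m k m' k', m ∈ M → k < g m → m' ∈ M → k' < g m' → k ≤ k' →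
              c (idx m + (k : ℕ)) = c (idx m' + (k' : ℕ)) → m = m' ∧ k = k' := by
            intro m k m' k' hm hk hm' hk' hle he
            have h1 := h.add_eq he (-k)
            rw [show idx m + (k : ℤ) + -k = idx m by ring,
              show idx m' + (k' : ℤ) + -k = idx m' + ((k' - k : ℕ) : ℤ) by omega] at h1
            have : k' - k = 0 := by
              by_contra h0
              apply (hg m' hm').2.2 (k' - k) (by omega) (by omega)
              rw [← h1, hidx m hm]; exact hm
            refine ⟨?_, by omega⟩
            rw [this] at h1
            rw [← hidx m hm, ← hidx m' hm']; simpa using h1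
          rintro ⟨m, k⟩ hp ⟨m', k'⟩ hp' he
          simp only [Finset.coe_sigma, Set.mem_sigma_iff, Finset.mem_coe, Finset.mem_range] at hp hp'
          simp only at he
          rcases le_total k k' with hl | hl
          · obtain ⟨rfl, rfl⟩ := key m k m' k' hp.1 hp.2 hp'.1 hp'.2 hl he; rfl
          · obtain ⟨rfl, rfl⟩ := key m' k' m k hp'.1 hp'.2 hp.1 hp.2 hl he.symm; rfl
    _ = n := card_Cset h

open Classical in
/-- the members of `M` related to the next member of `M`. -/
noncomputable def goodF (c : ℤ → V) (M : Finset V) (R : V → V → Prop) : Finset V :=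
  M.filter fun m => ∃ (i : ℤ) (d : ℕ), c i = m ∧ Nxt c M i d ∧ R m (c (i + d))

theorem mem_goodF (h : IsCyc G c n) {R : V → V → Prop} {i : ℤ} {d : ℕ} (hN : Nxt c M i d) :
    c i ∈ goodF c M R ↔ c i ∈ M ∧ R (c i) (c (i + d)) := by
  simp only [goodF, Finset.mem_filter]
  refine and_congr_right fun _ => ⟨?_, fun hR => ⟨i, d, rfl, hN, hR⟩⟩
  rintro ⟨j, e, hj, hN', hR⟩
  obtain rfl := hN.unique (hN'.congr h hj)
  rwa [h.add_eq hj] at hR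

theorem goodF_sub {R : V → V → Prop} : goodF c M R ⊆ M := by
  classical
  exact Finset.filter_subset _ _

theorem gap_good [DecidableEq V] (h : LCyc G c n) (hH : Comp G c H) (hM : M ⊆ Cset c n)
    (hMH : ∀ m ∈ M, ∃ s ∈ H, G.Adj s m) (h2 : 2 ≤ M.card) (R : V → V → Prop) (k : ℕ)
    (hR : ∀ (i : ℤ) (d : ℕ), 1 ≤ d → d < n → R (c i) (c (i + d)) → k + 2 ≤ d) :
    2 * M.card + k * (goodF c M R).card ≤ n := by
  have := gap_sum h.toIsCyc hM (fun m => 2 + if m ∈ goodF c M R then k else 0) (by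
    intro i d hi hN
    have hlt := hN.lt h.toIsCyc hM h2
    have h1 := hN.1
    split_ifs with hg
    · rw [mem_goodF h.toIsCyc hN] at hg
      have := hR i d h1 hlt hg.2
      omega
    · obtain ⟨s, hs, hs'⟩ := hMH _ hi
      obtain ⟨t, ht, ht'⟩ := hMH _ hN.2.1
      have := (hH.t1 h hs ht (i := i) (j := i + d) (by omega) (by omega) hs'.symm ht').1
      omega)
  rw [Finset.sum_add_distrib, Finset.sum_const, ← Finset.sum_filter,
    Finset.filter_mem_eq_inter, Finset.inter_eq_right.2 goodF_sub, Finset.sum_const] at this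
  simp only [smul_eq_mul] at this
  linarith [mul_comm 2 M.card, mul_comm k (goodF c M R).card]

/-- crossing from `A` to `B`. -/
theorem cross [DecidableEq V] (h : IsCyc G c n) {A B : Finset V} (hA : A ⊆ Cset c n) (hB : B ⊆ Cset c n)
    (hA' : A.Nonempty) (hB' : B.Nonempty) :
    ∃ (i : ℤ) (d : ℕ), Nxt c (A ∪ B) i d ∧ c i ∈ A ∧ c (i + d) ∈ B := by
  have hex : ∃ d : ℕ, 1 ≤ d ∧ ∃ i : ℤ, c i ∈ A ∧ c (i + d) ∈ B := by
    obtain ⟨a, ha⟩ := hA'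
    obtain ⟨b, hb⟩ := hB'
    obtain ⟨i, rfl⟩ := (mem_Cset h).1 (hA ha)
    obtain ⟨j, rfl⟩ := (mem_Cset h).1 (hB hb)
    obtain ⟨k, h1, h2, h3⟩ := h.window j (i + 1)
    refine ⟨(k - i).toNat, by omega, i, ha, ?_⟩
    rw [show i + ((k - i).toNat : ℤ) = k by omega, h3]; exact hb
  classical
  obtain ⟨h1, i, hi, hj⟩ := Nat.find_spec hex
  refine ⟨i, Nat.find hex, ⟨h1, Finset.mem_union_right _ hj, ?_⟩, hi, hj⟩
  intro e he1 he2 hm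
  rcases Finset.mem_union.1 hm with hm | hm
  · refine Nat.find_min hex (m := Nat.find hex - e) (by omega) ⟨by omega, i + e, hm, ?_⟩
    rw [show i + (e : ℤ) + ((Nat.find hex - e : ℕ) : ℤ) = i + (Nat.find hex : ℕ) by omega]
    exact hj
  · exact Nat.find_min hex he2 ⟨he1, i, hi, hm⟩

theorem cross2 [DecidableEq V] (h : IsCyc G c n) {A B : Finset V} (hA : A ⊆ Cset c n)
    (hB : B ⊆ Cset c n) (hA' : A.Nonempty) (hB' : B.Nonempty) (h2 : 2 ≤ (A ∪ B).card) :
    2 ≤ (goodF c (A ∪ B) (fun u w => (u ∈ A ∧ w ∈ B) ∨ (u ∈ B ∧ w ∈ A))).card ∧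
    A ∩ B ⊆ goodF c (A ∪ B) (fun u w => (u ∈ A ∧ w ∈ B) ∨ (u ∈ B ∧ w ∈ A)) := by
  set F := goodF c (A ∪ B) (fun u w => (u ∈ A ∧ w ∈ B) ∨ (u ∈ B ∧ w ∈ A)) with hF
  have hM : A ∪ B ⊆ Cset c n := Finset.union_subset hA hB
  have hsub : A ∩ B ⊆ F := by
    intro m hm
    rw [Finset.mem_inter] at hm
    obtain ⟨i, rfl⟩ := (mem_Cset h).1 (hA hm.1)
    obtain ⟨d, hN, _⟩ := exists_nxt (M := A ∪ B) h i ⟨i, Finset.mem_union_left _ hm.1⟩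
    rw [hF, mem_goodF h hN]
    refine ⟨Finset.mem_union_left _ hm.1, ?_⟩
    rcases Finset.mem_union.1 hN.2.1 with h1 | h1
    · exact Or.inr ⟨hm.2, h1⟩
    · exact Or.inl ⟨hm.1, h1⟩
  refine ⟨?_, hsub⟩
  obtain ⟨i, d, hN, hi, hd⟩ := cross h hA hB hA' hB'
  obtain ⟨i', d', hN', hi', hd'⟩ := cross h hB hA hB' hA'
  rw [Finset.union_comm] at hN'
  have g1 : c i ∈ F := by
    rw [hF, mem_goodF h hN]; exact ⟨Finset.mem_union_left _ hi, Or.inl ⟨hi, hd⟩⟩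
  have g2 : c i' ∈ F := by
    rw [hF, mem_goodF h hN']; exact ⟨Finset.mem_union_right _ hi', Or.inr ⟨hi', hd'⟩⟩
  by_cases he : c i = c i'
  · have := hN.unique (hN'.congr h he.symm)
    subst this
    rw [h.add_eq he.symm] at hd'
    have g3 : c (i + d) ∈ F := hsub (Finset.mem_inter.2 ⟨hd', hd⟩)
    have := hN.lt h hM h2
    have := hN.1
    have hne := h.sep (a := i) (b := i + d) (by omega) (by omega)
    exact Finset.one_lt_card.2 ⟨_, g1, _, g3, hne⟩
  · exact Finset.one_lt_card.2 ⟨_, g1, _, g2, he⟩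

end

section
variable [DecidableEq V] {G : SimpleGraph V} {c : ℤ → V} {n : ℕ} {H : Finset V}
  [DecidableRel G.Adj] [Fintype V]

theorem deg_split (x : V) : G.degree x = (G.neighborFinset x ∩ H).card +
    (G.neighborFinset x \ H).card := by
  rw [← card_neighborFinset_eq_degree, Finset.card_inter_add_card_sdiff]

theorem Comp.card_add_le (h : IsCyc G c n) (hH : Comp G c H) : n + H.card ≤ Fintype.card V := by
  rw [← card_Cset h, add_comm, ← Finset.card_union_of_disjoint (hH.disjoint_Cset h)]
  exact Finset.card_le_univ _

theorem F1a (h : LCyc G c n) (hH : Comp G c H) {x y : V} (hx : x ∈ H) (hy : y ∈ H)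
    {P : List V} (hP : PL G P x y) (hPH : ∀ v ∈ P, v ∈ H)
    (hA : (G.neighborFinset x \ H).Nonempty) (hB : (G.neighborFinset y \ H).Nonempty)
    (h2 : 2 ≤ (G.neighborFinset x \ H ∪ G.neighborFinset y \ H).card) (h3 : 3 ≤ P.length) :
    2 * ((G.neighborFinset x \ H).card + (G.neighborFinset y \ H).card) + 2 * P.length ≤ n + 6 := by
  have hA1 : G.neighborFinset x \ H ⊆ Cset c n := by
    rw [hH.nbr_sdiff h.toIsCyc hx]; exact Finset.inter_subset_right
  have hB1 : G.neighborFinset y \ H ⊆ Cset c n := by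
    rw [hH.nbr_sdiff h.toIsCyc hy]; exact Finset.inter_subset_right
  have hAa : ∀ v ∈ G.neighborFinset x \ H, G.Adj x v := by
    intro v hv; simpa using (Finset.mem_sdiff.1 hv).1
  have hBa : ∀ v ∈ G.neighborFinset y \ H, G.Adj y v := by
    intro v hv; simpa using (Finset.mem_sdiff.1 hv).1
  set A := G.neighborFinset x \ H
  set B := G.neighborFinset y \ H
  obtain ⟨c1, c2⟩ := cross2 h.toIsCyc hA1 hB1 hA hB h2
  have c3 := Finset.card_le_card c2
  have hdis : ∀ v ∈ P, ∀ i, c i ≠ v := fun v hv => hH.disj v (hPH v hv)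
  have := gap_good h hH (Finset.union_subset hA1 hB1) (by
    intro m hm
    rcases Finset.mem_union.1 hm with hm | hm
    · exact ⟨x, hx, hAa m hm⟩
    · exact ⟨y, hy, hBa m hm⟩) h2 (fun u w => (u ∈ A ∧ w ∈ B) ∨ (u ∈ B ∧ w ∈ A)) (P.length - 1) (by
    rintro i d hd1 hd2 (⟨hu, hw⟩ | ⟨hu, hw⟩)
    · have := Comp.T1P h hP hdis (i := i) (j := i + d) (by omega) (by omega) (hAa _ hu).symm (hBa _ hw)
      omega
    · have := Comp.T1P h hP.reverse (by simpa using hdis) (i := i) (j := i + d) (by omega)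
        (by omega) (hBa _ hu).symm (hAa _ hw)
      simp at this
      omega)
  have hu := Finset.card_union_add_card_inter A B
  set g := (goodF c (A ∪ B) (fun u w => (u ∈ A ∧ w ∈ B) ∨ (u ∈ B ∧ w ∈ A))).card
  obtain ⟨k, hk⟩ : ∃ k, P.length = k + 3 := ⟨P.length - 3, by omega⟩
  rw [hk] at this ⊢
  have e : (k + 3 - 1) * g = k * g + 2 * g := by rw [show k + 3 - 1 = k + 2 by omega]; ring
  rw [e] at this
  have : k * 2 ≤ k * g := Nat.mul_le_mul_left k c1
  omega

/-- degree sum inside `H` -/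
theorem F1 (hcut : Cut3 G) (h : LCyc G c n) (hH : Comp G c H) {δ : ℕ} (hδ : ∀ v, δ ≤ G.degree v)
    (hN : Fintype.card V + 6 ≤ 4 * δ) {x y : V} (hx : x ∈ H) (hy : y ∈ H)
    {P : List V} (hP : PL G P x y) (hPH : ∀ v ∈ P, v ∈ H) (h3 : 3 ≤ P.length) (hh : 2 ≤ H.card) :
    H.card + 2 * P.length ≤ 2 * ((G.neighborFinset x ∩ H).card + (G.neighborFinset y ∩ H).card) ∨
    H.card + 2 ≤ (G.neighborFinset x ∩ H).card + (G.neighborFinset y ∩ H).card := by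
  have fx := F2 hcut h hH hδ hh hx
  have fy := F2 hcut h hH hδ hh hy
  have dx := deg_split (H := H) (G := G) x
  have dy := deg_split (H := H) (G := G) y
  have ex := hδ x
  have ey := hδ y
  have hn := hH.card_add_le h.toIsCyc
  by_cases hA : (G.neighborFinset x \ H).Nonempty
  · by_cases hB : (G.neighborFinset y \ H).Nonempty
    · by_cases h2 : 2 ≤ (G.neighborFinset x \ H ∪ G.neighborFinset y \ H).card
      · have := F1a h hH hx hy hP hPH hA hB h2 h3
        left; omega
      · have h1 := Finset.card_le_card (Finset.subset_union_left (s₁ := G.neighborFinset x \ H)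
          (s₂ := G.neighborFinset y \ H))
        have h1' := Finset.card_le_card (Finset.subset_union_right (s₁ := G.neighborFinset x \ H)
          (s₂ := G.neighborFinset y \ H))
        right; omega
    · rw [Finset.not_nonempty_iff_eq_empty, ← Finset.card_eq_zero] at hB
      right; omega
  · rw [Finset.not_nonempty_iff_eq_empty, ← Finset.card_eq_zero] at hA
    right; omega

end
end NK

namespace NK

theorem exists_max {p : ℕ → Prop} (b : ℕ) (hb : ∀ k, p k → k ≤ b) (hex : ∃ k, p k) :
    ∃ k, p k ∧ ∀ m, p m → m ≤ k := by
  classical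
  obtain ⟨k, hk⟩ := hex
  exact ⟨Nat.findGreatest p b, Nat.findGreatest_spec (hb k hk) hk,
    fun m hm => Nat.le_findGreatest (hb m hm) hm⟩

section
variable {G : SimpleGraph V} {l : List V} {a b : V}

theorem PL.toFun (h : PL G l a b) : ∃ p : ℤ → V,
    (∀ i j : ℤ, 0 ≤ i → i < j → j < l.length → p i ≠ p j) ∧
    (∀ i : ℤ, 0 ≤ i → i + 1 < l.length → G.Adj (p i) (p (i + 1))) ∧
    (∀ v, v ∈ l ↔ ∃ i : ℤ, 0 ≤ i ∧ i < l.length ∧ p i = v) ∧ p 0 = a ∧ p (l.length - 1) = b := by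
  have hl := h.length_pos
  obtain ⟨hc, hn, ha, hb⟩ := h
  have hp : ∀ i : ℤ, 0 ≤ i → ∀ h : i.toNat < l.length, l.getD i.toNat a = l[i.toNat] := by
    intro i h1 h2; simp [h2]
  refine ⟨fun i => l.getD i.toNat a, ?_, ?_, ?_, ?_, ?_⟩
  · intro i j h1 h2 h3
    simp only
    rw [hp i h1 (by omega), hp j (by omega) (by omega), Ne, hn.getElem_inj_iff]
    omega
  · intro i h1 h2
    simp only
    rw [hp i h1 (by omega), hp (i + 1) (by omega) (by omega)]
    have := (List.isChain_iff_getElem.1 hc) i.toNat (by omega)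
    convert this using 2
    omega
  · intro v
    rw [List.mem_iff_getElem]
    constructor
    · rintro ⟨i, hi, rfl⟩
      exact ⟨i, by omega, by omega, by simp [hi]⟩
    · rintro ⟨i, h1, h2, rfl⟩
      exact ⟨i.toNat, by omega, by simp only; rw [hp i h1 (by omega)]⟩
  · rw [List.head?_eq_getElem?] at ha
    simp [List.getD, ha]
  · rw [List.getLast?_eq_getElem?] at hb
    simp only [List.getD]
    rw [show ((l.length : ℤ) - 1).toNat = l.length - 1 by omega, hb]
    rfl

theorem PL.boundary (h : PL G l a b) (S : V → Prop) (ha : S a) (hb : ¬ S b) :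
    ∃ u ∈ l, ∃ v ∈ l, S u ∧ ¬ S v ∧ G.Adj u v := by
  obtain ⟨p, -, hadj, hmem, h0, h1⟩ := h.toFun
  have hl := h.length_pos
  by_contra hcon
  push Not at hcon
  have : ∀ k : ℕ, k < l.length → S (p k) := by
    intro k
    induction k with
    | zero => intro _; simpa [h0] using ha
    | succ k ih =>
      intro hk
      by_contra hS
      have := hadj k (by omega) (by omega)
      refine hcon (p k) ((hmem _).2 ⟨k, by omega, by omega, rfl⟩) (p (k + 1 : ℕ))
        ((hmem _).2 ⟨(k + 1 : ℕ), by omega, by omega, rfl⟩) (ih (by omega)) hS ?_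
      exact_mod_cast this
  apply hb
  have := this (l.length - 1) (by omega)
  rwa [show ((l.length - 1 : ℕ) : ℤ) = l.length - 1 by omega, h1] at this

/-- connected set of vertices -/
def CnSet (G : SimpleGraph V) (H : Finset V) : Prop :=
  ∀ s ∈ H, ∀ t ∈ H, ∃ P, PL G P s t ∧ ∀ v ∈ P, v ∈ H

theorem PL.length_le [DecidableEq V] (h : PL G l a b) {H : Finset V} (hH : ∀ v ∈ l, v ∈ H) :
    l.length ≤ H.card := by
  rw [← List.toFinset_card_of_nodup h.2.1]
  exact Finset.card_le_card (fun v hv => hH v (by simpa using hv))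

variable [DecidableEq V] [DecidableRel G.Adj] [Fintype V] {H : Finset V}

/-- Ore-type lemma: close up a path. -/
theorem O1 (h : PL G l a b) (h3 : 3 ≤ l.length) (hl : ∀ v ∈ l, v ∈ H)
    (ha : ∀ v ∈ H, G.Adj a v → v ∈ l) (hb : ∀ v ∈ H, G.Adj b v → v ∈ l)
    (hd : l.length ≤ (G.neighborFinset a ∩ H).card + (G.neighborFinset b ∩ H).card) :
    ∃ d : ℤ → V, IsCyc G d l.length ∧ (∀ v, (∃ i, d i = v) ↔ v ∈ l) := by
  obtain ⟨p, hinj, hadj, hmem, h0, h1⟩ := h.toFun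
  set k := l.length with hk
  have hex : ∃ i : ℕ, i + 2 ≤ k ∧ G.Adj a (p (i + 1)) ∧ G.Adj b (p i) := by
    set X := (Finset.range (k - 1)).filter (fun i : ℕ => G.Adj a (p (i + 1))) with hX
    set Y := (Finset.range (k - 1)).filter (fun i : ℕ => G.Adj b (p i)) with hY
    have cX : (G.neighborFinset a ∩ H).card ≤ X.card := by
      apply Finset.card_le_card_of_surjOn (fun i : ℕ => p (i + 1))
      intro v hv
      simp only [Finset.coe_inter, Set.mem_inter_iff, Finset.mem_coe, mem_neighborFinset] at hv
      obtain ⟨i, hi, hi', rfl⟩ := (hmem v).1 (ha v hv.2 hv.1)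
      have : i ≠ 0 := by rintro rfl; rw [h0] at hv; simp at hv
      have e : ((i - 1).toNat : ℤ) + 1 = i := by omega
      refine ⟨(i - 1).toNat, ?_, by simp only [e]⟩
      simp only [hX, Finset.coe_filter, Finset.mem_range, Set.mem_ofPred_eq, e]
      exact ⟨by omega, hv.1⟩
    have cY : (G.neighborFinset b ∩ H).card ≤ Y.card := by
      apply Finset.card_le_card_of_surjOn (fun i : ℕ => p i)
      intro v hv
      simp only [Finset.coe_inter, Set.mem_inter_iff, Finset.mem_coe, mem_neighborFinset] at hv
      obtain ⟨i, hi, hi', rfl⟩ := (hmem v).1 (hb v hv.2 hv.1)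
      have : i ≠ k - 1 := by rintro rfl; rw [h1] at hv; simp at hv
      have e : ((i).toNat : ℤ) = i := by omega
      refine ⟨i.toNat, ?_, by simp only [e]⟩
      simp only [hY, Finset.coe_filter, Finset.mem_range, Set.mem_ofPred_eq, e]
      exact ⟨by omega, hv.1⟩
    by_contra hcon
    push Not at hcon
    have hdis : Disjoint X Y := by
      rw [Finset.disjoint_left]
      intro i hi hi'
      simp only [hX, hY, Finset.mem_filter, Finset.mem_range] at hi hi'
      exact hcon i (by omega) hi.2 hi'.2
    have := Finset.card_le_card (show X ∪ Y ⊆ Finset.range (k - 1) from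
      Finset.union_subset (Finset.filter_subset _ _) (Finset.filter_subset _ _))
    rw [Finset.card_union_of_disjoint hdis, Finset.card_range] at this
    omega
  obtain ⟨i, hi, hai, hbi⟩ := hex
  have s1 : PL G (seg p 0 (i + 1)) (p 0) (p i) := seg_PL (by omega)
    (fun j h1 h2 => hadj j h1 (by omega)) (fun j j' h1 h2 h3 => hinj j j' h1 h2 (by omega))
    (by push_cast; ring)
  have s2 : PL G (seg p (i + 1) (k - 1 - i)) (p (i + 1)) (p (k - 1)) := seg_PL (by omega)
    (fun j h1 h2 => hadj j (by omega) (by omega))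
    (fun j j' h1 h2 h3 => hinj j j' (by omega) h2 (by omega)) (by omega)
  rw [h0] at s1
  rw [h1] at s2
  have s := s1.append s2.reverse hbi.symm (by
    intro v hv hv'
    rw [List.mem_reverse] at hv'
    obtain ⟨j, _, _, hj⟩ := mem_seg.1 hv
    obtain ⟨j', _, _, hj'⟩ := mem_seg.1 hv'
    exact hinj j j' (by omega) (by omega) (by omega) (hj.trans hj'.symm))
  have hlen : (seg p 0 (i + 1) ++ (seg p (i + 1) (k - 1 - i)).reverse).length = k := by
    simp; omega
  obtain ⟨d, hd1, hd2, -⟩ := exists_cyc s hai.symm (by omega)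
  rw [hlen] at hd1
  refine ⟨d, hd1, fun v => ?_⟩
  rw [hd2, List.mem_append, List.mem_reverse, mem_seg, mem_seg, hmem]
  constructor
  · rintro (⟨j, _, _, hj⟩ | ⟨j, _, _, hj⟩)
    · exact ⟨j, by omega, by omega, hj⟩
    · exact ⟨j, by omega, by omega, hj⟩
  · rintro ⟨j, _, _, hj⟩
    by_cases hji : j ≤ i
    · exact Or.inl ⟨j, by omega, by omega, hj⟩
    · exact Or.inr ⟨j, by omega, by omega, hj⟩

/-- Hamilton cycle of `H` from degree sums along paths. -/
theorem ham_H (hC : CnSet G H) (h3 : 3 ≤ H.card)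
    (hdeg : ∀ x ∈ H, ∀ y ∈ H, ∀ P, PL G P x y → (∀ v ∈ P, v ∈ H) → 3 ≤ P.length →
      P.length ≤ (G.neighborFinset x ∩ H).card + (G.neighborFinset y ∩ H).card) :
    ∃ d : ℤ → V, IsCyc G d H.card ∧ (∀ v, (∃ i, d i = v) ↔ v ∈ H) := by
  obtain ⟨k, ⟨l, a, b, hl, hlH, rfl⟩, hmax⟩ := exists_max
    (p := fun k => ∃ l a b, PL G l a b ∧ (∀ v ∈ l, v ∈ H) ∧ l.length = k) H.card (by
      rintro k ⟨l, a, b, hl, hlH, rfl⟩; exact hl.length_le hlH) (by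
      obtain ⟨v, hv⟩ := Finset.card_pos.1 (by omega : 0 < H.card)
      exact ⟨1, [v], v, v, PL.single G v, by simpa using hv, rfl⟩)
  have hb : ∀ v ∈ H, G.Adj b v → v ∈ l := by
    intro v hv hbv
    by_contra hvl
    have := hl.append (PL.single G v) hbv (by rintro x hx hx'; simp at hx'; exact hvl (hx' ▸ hx))
    have := hmax _ ⟨_, _, _, this, by
      intro w hw; rw [List.mem_append, List.mem_singleton] at hw
      rcases hw with hw | rfl
      exacts [hlH w hw, hv], rfl⟩
    simp at this
  have ha : ∀ v ∈ H, G.Adj a v → v ∈ l := by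
    intro v hv hbv
    by_contra hvl
    have := (PL.single G v).append hl hbv.symm (by
      rintro x hx hx'; simp at hx; exact hvl (hx ▸ hx'))
    have := hmax _ ⟨_, _, _, this, by
      intro w hw; rw [List.mem_append, List.mem_singleton] at hw
      rcases hw with rfl | hw
      exacts [hv, hlH w hw], rfl⟩
    simp at this
  have hbd : l.length < H.card → ∃ u ∈ l, ∃ v ∈ H, v ∉ l ∧ G.Adj u v := by
    intro hlt
    obtain ⟨z, hz, hz'⟩ : ∃ z ∈ H, z ∉ l := by
      by_contra hcon
      push Not at hcon
      have : H ⊆ l.toFinset := fun v hv => by simpa using hcon v hv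
      have := Finset.card_le_card this
      rw [List.toFinset_card_of_nodup hl.2.1] at this
      omega
    obtain ⟨P, hP, hPH⟩ := hC a (hlH a hl.left_mem) z hz
    obtain ⟨u, hu, v, hv, h1, h2, h3⟩ := hP.boundary (fun w => w ∈ l) hl.left_mem hz'
    exact ⟨u, h1, v, hPH v hv, h2, h3⟩
  have hl3 : 3 ≤ l.length := by
    by_contra hlt
    obtain ⟨u, hu, v, hv, hvl, huv⟩ := hbd (by omega)
    have : u = a ∨ u = b := by
      obtain ⟨_, _, e1, e2⟩ := hl
      match l, hlt, hu, e1, e2 with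
      | [x], _, hu, e1, e2 => simp at hu e1 e2; left; rw [hu, e1]
      | [x, y], _, hu, e1, e2 =>
        simp at hu e1 e2
        rcases hu with rfl | rfl
        · left; exact e1
        · right; exact e2
      | x :: y :: z :: t, hlt, _, _, _ => simp at hlt
    rcases this with rfl | rfl
    · exact hvl (ha v hv huv)
    · exact hvl (hb v hv huv)
  obtain ⟨d, hd1, hd2⟩ := O1 hl hl3 hlH ha hb
    (hdeg a (hlH a hl.left_mem) b (hlH b hl.right_mem) l hl hlH hl3)
  have hlen : l.length = H.card := by
    by_contra hne
    have := hl.length_le hlH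
    obtain ⟨u, hu, v, hv, hvl, huv⟩ := hbd (by omega)
    obtain ⟨i, rfl⟩ := (hd2 u).2 hu
    have s := hd1.segPL (i := i + 1) (d := l.length) (by omega) le_rfl (e := i + l.length) (by ring)
    rw [hd1.per (b := i) rfl] at s
    have := s.append (PL.single G v) huv (by
      rintro x hx hx'
      simp at hx'; subst hx'
      obtain ⟨j, _, _, hj⟩ := mem_seg.1 hx
      exact hvl ((hd2 _).1 ⟨j, hj⟩))
    have := hmax _ ⟨_, _, _, this, by
      intro w hw; rw [List.mem_append, List.mem_singleton] at hw
      rcases hw with hw | rfl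
      · obtain ⟨j, _, _, hj⟩ := mem_seg.1 hw
        exact hlH w ((hd2 _).1 ⟨j, hj⟩)
      · exact hv, rfl⟩
    simp at this
  rw [hlen] at hd1
  refine ⟨d, hd1, fun v => ?_⟩
  rw [hd2]
  have : l.toFinset = H := Finset.eq_of_subset_of_card_le (fun v hv => hlH v (by simpa using hv))
    (by rw [List.toFinset_card_of_nodup hl.2.1]; omega)
  rw [← this]; simp

/-- Hamilton-connectedness. -/
theorem O2 {d : ℤ → V} (hd : IsCyc G d H.card) (hdH : ∀ v, (∃ i, d i = v) ↔ v ∈ H)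
    (hdeg : ∀ x ∈ H, ∀ y ∈ H, x ≠ y →
      H.card + 1 ≤ (G.neighborFinset x ∩ H).card + (G.neighborFinset y ∩ H).card)
    {s t : V} (hs : s ∈ H) (ht : t ∈ H) (hst : s ≠ t) :
    ∃ P, PL G P s t ∧ (∀ v ∈ P, v ∈ H) ∧ P.length = H.card := by
  have key : ∀ d : ℤ → V, IsCyc G d H.card → (∀ v, (∃ i, d i = v) ↔ v ∈ H) → ∀ j : ℕ, 1 ≤ j →
      j < H.card → ∃ P, PL G P (d 0) (d j) ∧ (∀ v ∈ P, v ∈ H) ∧ P.length = H.card := by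
    clear! d
    intro d hd hdH j hj1 hj2
    set h := H.card with hh
    have h0 : d h = d 0 := hd.per (by simp)
    have hdm : ∀ i, d i ∈ H := fun i => (hdH _).1 ⟨i, rfl⟩
    have hsegm : ∀ i k, ∀ v ∈ seg d i k, v ∈ H := by
      intro i k v hv
      obtain ⟨j, _, _, rfl⟩ := mem_seg.1 hv
      exact hdm j
    have hCs : Cset d h = H := by
      ext v; rw [mem_Cset hd, hdH]
    have hsum := hdeg (d 1) (hdm _) (d (j + 1)) (hdm _) (hd.sep (by omega) (by omega))
    rw [← hCs, ← pos_card hd, ← pos_card hd] at hsum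
    simp only [mem_neighborFinset] at hsum
    set X := (Finset.Icc 1 h).filter (fun k : ℕ => G.Adj (d 1) (d k)) with hX
    set Y := (Finset.Icc 1 h).filter (fun k : ℕ => G.Adj (d (j + 1)) (d k)) with hY
    have mX : ∀ k, k ∈ X ↔ (1 ≤ k ∧ k ≤ h) ∧ G.Adj (d 1) (d k) := by intro k; simp [hX]
    have mY : ∀ k, k ∈ Y ↔ (1 ≤ k ∧ k ≤ h) ∧ G.Adj (d (j + 1)) (d k) := by intro k; simp [hY]
    have nX : 1 ∉ X := by rw [mX]; rintro ⟨_, hh⟩; simp at hh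
    have nY : j + 1 ∉ Y := by rw [mY]; rintro ⟨_, hh⟩; simp at hh
    have hcase : (∃ k, 1 ≤ k ∧ k + 1 ≤ j ∧ k ∈ Y ∧ k + 1 ∈ X) ∨
        (∃ m, j + 1 ≤ m ∧ m < h ∧ m ∈ X ∧ m + 1 ∈ Y) := by
      by_contra hcon
      push Not at hcon
      obtain ⟨hc1, hc2⟩ := hcon
      have c1 := Finset.pred_card_le_card_erase (s := X) (a := h)
      have c2 := Finset.pred_card_le_card_erase (s := Y) (a := j)
      have i1 : ((X.erase h).image (fun k => if k ≤ j then k - 1 else k)).card = (X.erase h).card := by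
        apply Finset.card_image_of_injOn
        intro a ha b hb hab
        simp only [Finset.coe_erase, Set.mem_sdiff, Finset.mem_coe, mX, Set.mem_singleton_iff] at ha hb
        simp only at hab
        split_ifs at hab <;> omega
      have i2 : ((Y.erase j).image (fun k => if k ≤ j then k else k - 1)).card = (Y.erase j).card := by
        apply Finset.card_image_of_injOn
        intro a ha b hb hab
        simp only [Finset.coe_erase, Set.mem_sdiff, Finset.mem_coe, mY, Set.mem_singleton_iff] at ha hb
        simp only at hab
        split_ifs at hab <;> omega
      have hdis : Disjoint ((X.erase h).image (fun k => if k ≤ j then k - 1 else k))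
          ((Y.erase j).image (fun k => if k ≤ j then k else k - 1)) := by
        rw [Finset.disjoint_left]
        intro k hk hk'
        simp only [Finset.mem_image, Finset.mem_erase] at hk hk'
        obtain ⟨a, ⟨ha, haX⟩, hak⟩ := hk
        obtain ⟨b, ⟨hb, hbY⟩, hbk⟩ := hk'
        have ha1 : a ≠ 1 := by rintro rfl; exact nX haX
        have hb1 : b ≠ j + 1 := by rintro rfl; exact nY hbY
        have ha2 := ((mX a).1 haX).1
        have hb2 := ((mY b).1 hbY).1
        split_ifs at hak hbk with q1 q2 q2
        · obtain rfl : a = b + 1 := by omega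
          exact hc1 b (by omega) (by omega) hbY haX
        · omega
        · omega
        · obtain rfl : b = a + 1 := by omega
          exact hc2 a (by omega) (by omega) haX hbY
      have hsub : ((X.erase h).image (fun k => if k ≤ j then k - 1 else k)) ∪
          ((Y.erase j).image (fun k => if k ≤ j then k else k - 1)) ⊆
          (Finset.Icc 1 (h - 1)).erase j := by
        intro k hk
        simp only [Finset.mem_union, Finset.mem_image, Finset.mem_erase] at hk
        rw [Finset.mem_erase, Finset.mem_Icc]
        rcases hk with ⟨a, ⟨ha, haX⟩, hak⟩ | ⟨b, ⟨hb, hbY⟩, hbk⟩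
        · have ha1 : a ≠ 1 := by rintro rfl; exact nX haX
          have ha2 := ((mX a).1 haX).1
          split_ifs at hak <;> omega
        · have hb1 : b ≠ j + 1 := by rintro rfl; exact nY hbY
          have hb2 := ((mY b).1 hbY).1
          split_ifs at hbk <;> omega
      have := Finset.card_le_card hsub
      rw [Finset.card_union_of_disjoint hdis, i1, i2, Finset.card_erase_of_mem (Finset.mem_Icc.2 (by omega)),
        Nat.card_Icc] at this
      omega
    rcases hcase with ⟨k, hk1, hk2, hkY, hkX⟩ | ⟨m, hm1, hm2, hmX, hmY⟩
    · have p1 := (hd.segPL (i := j + 1) (d := h - j) (by omega) (by omega) (e := h) (by omega)).reverse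
      have p2 := (hd.segPL (i := 1) (d := k) (by omega) (by omega) (e := k) (by omega)).reverse
      have p3 := (hd.segPL (i := k + 1) (d := j - k) (by omega) (by omega) (e := j) (by omega))
      have p := (p1.append p2 ((mY k).1 hkY).2 (by
        intro v hv hv'
        rw [List.mem_reverse] at hv hv'
        exact hd.seg_disj (by omega) (by omega) v hv' hv)).append p3
        (by have := ((mX _).1 hkX).2; exact_mod_cast this) (by
        intro v hv hv'
        simp only [List.mem_append, List.mem_reverse] at hv
        rcases hv with hv | hv
        · exact hd.seg_disj (by omega) (by omega) v hv' hv
        · exact hd.seg_disj (by omega) (by omega) v hv hv')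
      rw [h0] at p
      refine ⟨_, p, ?_, ?_⟩
      · intro v hv
        simp only [List.mem_append, List.mem_reverse] at hv
        rcases hv with (hv | hv) | hv <;> exact hsegm _ _ v hv
      · simp; omega
    · have p1 := (hd.segPL (i := m + 1) (d := h - m) (by omega) (by omega) (e := h) (by omega)).reverse
      have p2 := (hd.segPL (i := j + 1) (d := m - j) (by omega) (by omega) (e := m) (by omega))
      have p3 := (hd.segPL (i := 1) (d := j) (by omega) (by omega) (e := j) (by omega))
      have p := (p1.append p2 (by have := ((mY _).1 hmY).2.symm; exact_mod_cast this) (by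
        intro v hv hv'
        rw [List.mem_reverse] at hv
        exact hd.seg_disj (by omega) (by omega) v hv' hv)).append p3
        ((mX _).1 hmX).2.symm (by
        intro v hv hv'
        simp only [List.mem_append, List.mem_reverse] at hv
        rcases hv with hv | hv
        · exact hd.seg_disj (by omega) (by omega) v hv' hv
        · exact hd.seg_disj (by omega) (by omega) v hv' hv)
      rw [h0] at p
      refine ⟨_, p, ?_, ?_⟩
      · intro v hv
        simp only [List.mem_append, List.mem_reverse] at hv
        rcases hv with (hv | hv) | hv <;> exact hsegm _ _ v hv
      · simp; omega
  obtain ⟨i, rfl⟩ := (hdH s).2 hs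
  obtain ⟨j, rfl⟩ := (hdH t).2 ht
  obtain ⟨j', h1, h2, h3⟩ := hd.window j i
  have hne : j' ≠ i := by rintro rfl; exact hst h3
  obtain ⟨P, hP, hP1, hP2⟩ := key (fun k => d (k + i)) (hd.rot i) (by
    intro v
    rw [← hdH]
    constructor
    · rintro ⟨k, hk⟩; exact ⟨_, hk⟩
    · rintro ⟨k, hk⟩; exact ⟨k - i, by simpa using hk⟩) (j' - i).toNat (by omega) (by omega)
  refine ⟨P, ?_, hP1, hP2⟩
  convert hP using 1
  · simp
  · rw [← h3]; congr 1; omega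

end
end NK

namespace NK

section
variable [DecidableEq V] {G : SimpleGraph V} {c : ℤ → V} {n : ℕ} {H : Finset V}

/-- two consecutive attachment vertices with distinct attachments -/
def Rel (G : SimpleGraph V) (H : Finset V) (u w : V) : Prop :=
  ∃ s ∈ H, ∃ t ∈ H, s ≠ t ∧ G.Adj s u ∧ G.Adj t w

open Classical in
theorem three_good (hcut : Cut3 G) (h : LCyc G c n) (hH : Comp G c H) (h3 : 3 ≤ H.card)
    {M : Finset V} (hM : ∀ m, m ∈ M ↔ (∃ i, c i = m) ∧ ∃ s ∈ H, G.Adj s m) :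
    3 ≤ (goodF c M (Rel G H)).card := by
  by_contra hlt
  set F := goodF c M (Rel G H) with hF
  have hn := h.three
  let f : V → V := fun m => if hm : ∃ s ∈ H, G.Adj s m ∧ ∀ t ∈ H, G.Adj t m → t = s then hm.choose
    else m
  have hf1 : ∀ m s, s ∈ H → G.Adj s m → (∀ t ∈ H, G.Adj t m → t = s) → f m = s := by
    intro m s hs hsm hu
    have hm : ∃ s ∈ H, G.Adj s m ∧ ∀ t ∈ H, G.Adj t m → t = s := ⟨s, hs, hsm, hu⟩
    simp only [f, dif_pos hm]
    exact hu _ hm.choose_spec.1 hm.choose_spec.2.1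
  have hf2 : ∀ m s, s ∈ H → G.Adj s m → f m ≠ s → f m = m := by
    intro m s hs hsm hne
    by_cases hm : ∃ s ∈ H, G.Adj s m ∧ ∀ t ∈ H, G.Adj t m → t = s
    · exfalso
      apply hne
      simp only [f, dif_pos hm]
      exact (hm.choose_spec.2.2 s hs hsm).symm
    · simp only [f, dif_neg hm]
  set T := F.image f with hT
  have hTc : T.card ≤ 2 := Finset.card_image_le.trans (by omega)
  obtain ⟨s, m, hs, hmH, hsT, hmT, hsm⟩ := hcut T H hTc
    (by
      by_contra hcon
      push Not at hcon
      have := Finset.card_le_card (show H ⊆ T from hcon)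
      omega)
    (by
      by_contra hcon
      push Not at hcon
      have : Cset c n ⊆ T := fun v hv => hcon v
        (fun hvH => Finset.disjoint_left.1 (hH.disjoint_Cset h.toIsCyc) hvH hv)
      have := Finset.card_le_card this
      rw [card_Cset h.toIsCyc] at this
      omega)
  obtain ⟨i, rfl⟩ := (hH.closed s hs m hsm).resolve_left hmH
  have hex : ∃ j, c j ∈ M := ⟨i, (hM _).2 ⟨⟨i, rfl⟩, s, hs, hsm⟩⟩
  have ng : ∀ (j : ℤ) (d : ℕ), c j ∈ M → Nxt c M j d → c j ∉ F → G.Adj s (c j) →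
      (∀ t ∈ H, G.Adj t (c j) → t = s) ∧ (∀ t ∈ H, G.Adj t (c (j + d)) → t = s) := by
    intro j d hj hN hjF hsj
    rw [hF, mem_goodF h.toIsCyc hN] at hjF
    have hR : ¬ Rel G H (c j) (c (j + d)) := fun hR => hjF ⟨hj, hR⟩
    have h2 : ∀ t ∈ H, G.Adj t (c (j + d)) → t = s := by
      intro t ht htj
      by_contra hne
      exact hR ⟨s, hs, t, ht, fun e => hne e.symm, hsj, htj⟩
    refine ⟨?_, h2⟩
    intro t ht htj
    obtain ⟨r, hr, hrj⟩ := ((hM _).1 hN.2.1).2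
    have := h2 r hr hrj
    subst this
    by_contra hne
    exact hR ⟨t, ht, r, hr, hne, htj, hrj⟩
  have all : ∀ d : ℕ, c (i + d) ∈ M → c (i + d) ∉ F ∧ G.Adj s (c (i + d)) := by
    intro d
    induction d using Nat.strong_induction_on with
    | _ d ih =>
      intro hd
      by_cases hd0 : d = 0
      · subst hd0
        simp only [Nat.cast_zero, add_zero]
        refine ⟨?_, hsm⟩
        intro hiF
        have : f (c i) ∈ T := Finset.mem_image_of_mem _ hiF
        have hne : f (c i) ≠ s := by rintro e; rw [e] at this; exact hsT this
        rw [hf2 _ s hs hsm hne] at this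
        exact hmT this
      · set e := Nat.findGreatest (fun e => c (i + e) ∈ M) (d - 1) with he
        have h0 : c (i + (0 : ℕ)) ∈ M := (hM _).2 ⟨⟨_, rfl⟩, s, hs, by simpa using hsm⟩
        have heM : c (i + e) ∈ M := Nat.findGreatest_spec (P := fun e : ℕ => c (i + e) ∈ M)
          (Nat.zero_le _) h0
        have hed : e ≤ d - 1 := Nat.findGreatest_le _
        obtain ⟨i1, i2⟩ := ih e (by omega) heM
        have eqd : i + (e : ℤ) + ((d - e : ℕ) : ℤ) = i + d := by omega
        have hN : Nxt c M (i + e) (d - e) := by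
          refine ⟨by omega, by rw [eqd]; exact hd, ?_⟩
          intro k hk1 hk2 hk3
          rw [show i + (e : ℤ) + (k : ℤ) = i + ((e + k : ℕ) : ℤ) by omega] at hk3
          have := Nat.le_findGreatest (P := fun e : ℕ => c (i + e) ∈ M) (m := e + k) (n := d - 1)
            (by omega) hk3
          omega
        have h2 := (ng _ _ heM hN i1 i2).2
        rw [eqd] at h2
        obtain ⟨r, hr, hrd⟩ := ((hM _).1 hd).2
        have := h2 r hr hrd
        subst this
        refine ⟨?_, hrd⟩
        intro hdF
        have : f (c (i + d)) ∈ T := Finset.mem_image_of_mem _ hdF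
        rw [hf1 _ r hr hrd h2] at this
        exact hsT this
  obtain ⟨p, hp, hps⟩ := Finset.exists_mem_ne (by omega : 1 < H.card) s
  obtain ⟨p, q, hpH, hqH, hpT, hqT, hpq⟩ := hcut {s} H (by simp) ⟨p, hp, by simpa using hps⟩
    ⟨c i, hmH, by simp; rintro rfl; exact hmH hs⟩
  obtain ⟨j, rfl⟩ := (hH.closed p hpH q hpq).resolve_left hqH
  obtain ⟨k, k1, k2, k3⟩ := h.window j i
  have eqk : i + ((k - i).toNat : ℤ) = k := by omega
  have hkM : c k ∈ M := (hM _).2 ⟨⟨k, rfl⟩, p, hpH, by rw [k3]; exact hpq⟩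
  obtain ⟨a1, a2⟩ := all (k - i).toNat (by rw [eqk]; exact hkM)
  rw [eqk] at a1 a2
  obtain ⟨d, hN, _⟩ := exists_nxt (M := M) h.toIsCyc k hex
  have := (ng k d hkM hN a1 a2).1 p hpH (by rw [k3]; exact hpq)
  simp [this] at hpT

variable [DecidableRel G.Adj] [Fintype V]

theorem big_comp (hcut : Cut3 G) (h : LCyc G c n) (hH : Comp G c H) {δ : ℕ}
    (hδ : ∀ v, δ ≤ G.degree v) (hN : Fintype.card V + 6 ≤ 4 * δ) (h3 : 3 ≤ H.card) : False := by
  obtain ⟨d, hd1, hd2⟩ := ham_H (G := G) hH.conn h3 (by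
    intro x hx y hy P hP hPH hP3
    have := hP.length_le hPH
    rcases F1 hcut h hH hδ hN hx hy hP hPH hP3 (by omega) with h1 | h1 <;> omega)
  have hdm : ∀ i, d i ∈ H := fun i => (hd2 _).1 ⟨i, rfl⟩
  have hsegm : ∀ i k, ∀ v ∈ seg d i k, v ∈ H := by
    intro i k v hv
    obtain ⟨j, _, _, rfl⟩ := mem_seg.1 hv
    exact hdm j
  have hdeg : ∀ x ∈ H, ∀ y ∈ H, x ≠ y →
      H.card + 1 ≤ (G.neighborFinset x ∩ H).card + (G.neighborFinset y ∩ H).card := by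
    intro x hx y hy hxy
    obtain ⟨i, rfl⟩ := (hd2 x).2 hx
    obtain ⟨j, rfl⟩ := (hd2 y).2 hy
    obtain ⟨k, k1, k2, k3⟩ := hd1.window j i
    have hki : k ≠ i := by rintro rfl; exact hxy k3
    have hpath : ∃ P, PL G P (d i) (d j) ∧ (∀ v ∈ P, v ∈ H) ∧ H.card + 2 ≤ 2 * P.length := by
      have p1 := hd1.segPL (i := i) (d := (k - i).toNat + 1) (by omega) (by omega) (e := k) (by omega)
      have p2 := (hd1.segPL (i := k) (d := (i + H.card - k).toNat + 1) (by omega) (by omega)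
        (e := i + H.card) (by omega)).reverse
      rw [hd1.per (b := i) rfl] at p2
      rw [k3] at p1 p2
      by_cases hc : (H.card : ℤ) ≤ 2 * (k - i)
      · exact ⟨_, p1, fun v hv => hsegm _ _ v hv, by rw [seg_length]; omega⟩
      · exact ⟨_, p2, fun v hv => hsegm _ _ v (List.mem_reverse.1 hv), by
          rw [List.length_reverse, seg_length]; omega⟩
    obtain ⟨P, hP, hPH, hPl⟩ := hpath
    rcases F1 hcut h hH hδ hN hx hy hP hPH (by omega) (by omega) with h1 | h1 <;> omega
  have ham := fun {s t : V} => O2 hd1 hd2 hdeg (s := s) (t := t)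
  classical
  set M := (Cset c n).filter (fun m => ∃ s ∈ H, G.Adj s m) with hMdef
  have hM : ∀ m, m ∈ M ↔ (∃ i, c i = m) ∧ ∃ s ∈ H, G.Adj s m := by
    intro m; rw [hMdef, Finset.mem_filter, mem_Cset h.toIsCyc]
  have hM2 : 2 ≤ M.card := by
    obtain ⟨v, hv⟩ := Finset.card_pos.1 (by omega : 0 < H.card)
    obtain ⟨i, j, s, t, h1, h2, hs, ht, -, -, ha, hb⟩ := attach2 hcut h hH v
      (Finset.exists_mem_ne (by omega : 1 < H.card) v)
    exact Finset.one_lt_card.2 ⟨c i, (hM _).2 ⟨⟨i, rfl⟩, s, hs, ha.symm⟩, c j,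
      (hM _).2 ⟨⟨j, rfl⟩, t, ht, hb⟩, h.sep h1 h2⟩
  have hg := gap_good (M := M) h hH (Finset.filter_subset _ _) (fun m hm => ((hM m).1 hm).2) hM2 (Rel G H)
    (H.card - 1) (by
      rintro i d hd1 hd2 ⟨s, hs, t, ht, hst, hsi, htd⟩
      obtain ⟨P, hP, hPH, hPl⟩ := ham hs ht hst
      have := Comp.T1P h hP (fun v hv => hH.disj v (hPH v hv)) (i := i) (j := i + d) (by omega)
        (by omega) hsi.symm htd
      omega)
  have g3 := three_good hcut h hH h3 hM
  obtain ⟨x, hx, y, hy, hxy⟩ := Finset.one_lt_card.1 (by omega : 1 < H.card)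
  have hsub : ∀ z ∈ H, G.neighborFinset z \ H ⊆ M := by
    intro z hz v hv
    rw [hH.nbr_sdiff h.toIsCyc hz, Finset.mem_inter, mem_neighborFinset, mem_Cset h.toIsCyc] at hv
    exact (hM v).2 ⟨hv.2, z, hz, hv.1⟩
  have hp : (G.neighborFinset x \ H) ∩ (G.neighborFinset y \ H) ⊆ goodF c M (Rel G H) := by
    intro m hm
    rw [Finset.mem_inter] at hm
    have hmM := hsub x hx hm.1
    obtain ⟨i, rfl⟩ := ((hM _).1 hmM).1
    obtain ⟨d, hN, _⟩ := exists_nxt (M := M) h.toIsCyc i ⟨i, hmM⟩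
    rw [mem_goodF h.toIsCyc hN]
    refine ⟨hmM, ?_⟩
    obtain ⟨t, ht, htd⟩ := ((hM _).1 hN.2.1).2
    simp only [Finset.mem_sdiff, mem_neighborFinset] at hm
    by_cases htx : x = t
    · exact ⟨y, hy, t, ht, fun e => hxy (htx.trans e.symm), hm.2.1, htd⟩
    · exact ⟨x, hx, t, ht, htx, hm.1.1, htd⟩
  have cp := Finset.card_le_card hp
  have cu := Finset.card_le_card (Finset.union_subset (hsub x hx) (hsub y hy))
  have ce := Finset.card_union_add_card_inter (G.neighborFinset x \ H) (G.neighborFinset y \ H)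
  have hin : ∀ z ∈ H, (G.neighborFinset z ∩ H).card + 1 ≤ H.card := by
    intro z hz
    have : G.neighborFinset z ∩ H ⊆ H.erase z := by
      intro v hv
      simp only [Finset.mem_inter, mem_neighborFinset] at hv
      rw [Finset.mem_erase]
      exact ⟨hv.1.ne', hv.2⟩
    have := Finset.card_le_card this
    rw [Finset.card_erase_of_mem hz] at this
    omega
  have dx := deg_split (H := H) (G := G) x
  have dy := deg_split (H := H) (G := G) y
  have ex := hδ x
  have ey := hδ y
  have ix := hin x hx
  have iy := hin y hy
  have hn := hH.card_add_le h.toIsCyc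
  set g := (goodF c M (Rel G H)).card
  obtain ⟨k, hk⟩ : ∃ k, H.card = k + 3 := ⟨H.card - 3, by omega⟩
  rw [hk, show k + 3 - 1 = k + 2 by omega] at hg
  have : k * 3 ≤ k * g := Nat.mul_le_mul_left k g3
  have : (k + 2) * g = k * g + 2 * g := by ring
  omega

end
end NK

namespace NK

theorem PL_of_walk {G : SimpleGraph V} {a b : V} (p : G.Walk a b) (hp : p.IsPath) :
    PL G p.support a b := by
  refine ⟨p.isChain_adj_support, hp.support_nodup, ?_, ?_⟩
  · rw [List.head?_eq_some_head (by simp)]; simp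
  · rw [List.getLast?_eq_some_getLast (by simp)]; simp

theorem exists_comp [Fintype V] {G : SimpleGraph V} {c : ℤ → V} {v : V} (hv : ∀ i, c i ≠ v) :
    ∃ H : Finset V, Comp G c H ∧ v ∈ H := by
  classical
  let U : Set V := {u | ∀ i, c i ≠ u}
  let v' : U := ⟨v, hv⟩
  let H : Finset V := Finset.univ.filter (fun w => ∃ hw : w ∈ U, (G.induce U).Reachable v' ⟨w, hw⟩)
  have mH : ∀ w, w ∈ H ↔ ∃ hw : w ∈ U, (G.induce U).Reachable v' ⟨w, hw⟩ := by
    intro w; simp [H]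
  refine ⟨H, ⟨?_, ?_, ?_⟩, (mH v).2 ⟨hv, Reachable.refl _⟩⟩
  · intro s hs t ht
    obtain ⟨hs, hs'⟩ := (mH s).1 hs
    obtain ⟨ht, ht'⟩ := (mH t).1 ht
    obtain ⟨p, hp⟩ := (hs'.symm.trans ht').exists_isPath
    refine ⟨_, PL_of_walk (p.map (Embedding.induce U).toHom)
      (Walk.IsPath.map (Embedding.induce (G := G) U).injective hp), ?_⟩
    intro w hw
    rw [Walk.support_map, List.mem_map] at hw
    obtain ⟨u, hu, rfl⟩ := hw
    exact (mH _).2 ⟨u.2, hs'.trans (p.takeUntil u hu).reachable⟩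
  · intro s hs w hw
    obtain ⟨hs, hs'⟩ := (mH s).1 hs
    by_cases hwU : w ∈ U
    · left
      refine (mH w).2 ⟨hwU, hs'.trans (Adj.reachable ?_)⟩
      exact hw
    · right
      simpa [U] using hwU
  · intro w hw i
    exact ((mH w).1 hw).1 i

open Classical in
/-- shifted set -/
noncomputable def shiftS [Fintype V] (c : ℤ → V) (k : ℤ) (F : Finset V) : Finset V :=
  Finset.univ.filter (fun v => ∃ i, c i = v ∧ c (i + k) ∈ F)

theorem mem_shiftS [Fintype V] {c : ℤ → V} {k : ℤ} {F : Finset V} {v : V} :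
    v ∈ shiftS c k F ↔ ∃ i, c i = v ∧ c (i + k) ∈ F := by
  simp [shiftS]

section
variable [DecidableEq V] [Fintype V] {G : SimpleGraph V} {c : ℤ → V} {n : ℕ} {H : Finset V}

theorem card_shiftS (h : IsCyc G c n) {k : ℤ} {F : Finset V} (hF : F ⊆ Cset c n) :
    F.card ≤ (shiftS c k F).card := by
  have hidx : ∀ v : V, ∃ i : ℤ, (∃ j, c j = v) → c i = v := by
    intro v
    by_cases hv : ∃ j, c j = v
    · obtain ⟨j, hj⟩ := hv; exact ⟨j, fun _ => hj⟩
    · exact ⟨0, fun hh => absurd hh hv⟩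
  choose idx hidx using hidx
  apply Finset.card_le_card_of_surjOn (fun v => c (idx v + k))
  intro w hw
  obtain ⟨j, rfl⟩ := (mem_Cset h).1 (hF hw)
  refine ⟨c (j - k), ?_, ?_⟩
  · rw [Finset.mem_coe, mem_shiftS]
    exact ⟨j - k, rfl, by simpa using hw⟩
  · have := h.add_eq (hidx (c (j - k)) ⟨_, rfl⟩) k
    simpa using this

variable [DecidableRel G.Adj]

theorem two_deg {δ : ℕ} (hδ : ∀ v, δ ≤ G.degree v) (x y : V) :
    δ ≤ (G.neighborFinset x \ {x, y}).card + 1 := by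
  have h1 := deg_split (H := {x, y}) (G := G) x
  have h2 := hδ x
  have : G.neighborFinset x ∩ {x, y} ⊆ {y} := by
    intro v hv
    simp only [Finset.mem_inter, mem_neighborFinset, Finset.mem_insert, Finset.mem_singleton] at hv ⊢
    rcases hv with ⟨h1, rfl | h2⟩
    · simp at h1
    · exact h2
  have := Finset.card_le_card this
  rw [Finset.card_singleton] at this
  omega

theorem few {x y : V} (h : LCyc G c n) (hH : Comp G c {x, y}) (hxy : x ≠ y) {δ κ : ℕ}
    (hδ : ∀ v, δ ≤ G.degree v) (hκ : 3 ≤ κ) (hN : Fintype.card V + 2 * κ ≤ 4 * δ)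
    {S E : Finset V} (hS : S.card ≤ κ) (hE : ∀ w ∈ E, ∀ u, G.Adj w u → u ∈ E ∨ u ∈ S)
    (hyE : y ∉ E) (hyS : y ∉ S) :
    (shiftS c (-1) (G.neighborFinset y \ {x, y}) ∩ E).card ≤ 1 := by
  by_contra hlt
  obtain ⟨v, hv, w, hw, hvw⟩ := Finset.one_lt_card.1 (not_le.1 hlt)
  simp only [Finset.mem_inter, mem_shiftS] at hv hw
  obtain ⟨⟨i, rfl, hi⟩, hiE⟩ := hv
  obtain ⟨⟨j, rfl, hj⟩, hjE⟩ := hw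
  obtain ⟨k, k1, k2, k3⟩ := h.window j i
  have hki : k ≠ i := by rintro rfl; exact hvw k3
  rw [← h.add_eq k3] at hj
  rw [← k3] at hjE
  have ai : G.Adj y (c (i + -1)) := by simpa using (Finset.mem_sdiff.1 hi).1
  have aj : G.Adj y (c (k + -1)) := by simpa using (Finset.mem_sdiff.1 hj).1
  have hn := hH.card_add_le h.toIsCyc
  have hc : ({x, y} : Finset V).card = 2 := Finset.card_pair hxy
  have key := key4 h hH (x := x) (s := y) (t := y) (by simp) (by simp) (by simp) hxy.symm hxy.symm
    (i := i + -1) (j := k + -1) (by omega) (by omega) ai.symm aj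
    (G.neighborFinset y \ {x, y}) S (by
      intro v hv
      exact ⟨y, by simp, by simpa using (Finset.mem_sdiff.1 hv).1⟩) (by
      rw [hH.nbr_sdiff h.toIsCyc (by simp)]; exact Finset.inter_subset_right) (by
      intro v hv hv'
      rw [neg_add_cancel_right, neg_add_cancel_right] at hv'
      have hyv : G.Adj y v := by simpa using (Finset.mem_sdiff.1 hv).1
      have : v ∈ E ∨ v ∈ S := by
        rcases hv' with hv' | hv'
        · exact hE _ hiE v hv'
        · exact hE _ hjE v hv'
      refine this.resolve_left fun hvE => ?_
      rcases hE v hvE y hyv.symm with h1 | h1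
      · exact hyE h1
      · exact hyS h1)
  have d1 := two_deg hδ x y
  have d2 := two_deg hδ y x
  rw [Finset.pair_comm] at d2
  have := hδ (c (i + -1 + 1))
  have := hδ (c (k + -1 + 1))
  omega

theorem two_final {x y : V} (h : LCyc G c n) (hH : Comp G c {x, y}) (hxy : x ≠ y) {δ κ : ℕ}
    (hδ : ∀ v, δ ≤ G.degree v) (hκ : 3 ≤ κ) (hN : Fintype.card V + 2 * κ ≤ 4 * δ)
    {S E : Finset V} (hS : S.card ≤ κ) (hE : ∀ w ∈ E, ∀ u, G.Adj w u → u ∈ E ∨ u ∈ S)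
    (hE0 : E.Nonempty) (hxE : x ∉ E) (hxS : x ∉ S) (hyE : y ∉ E) (hyS : y ∉ S) : False := by
  obtain ⟨w, hw⟩ := hE0
  have hn3 := h.three
  have hx : x ∈ ({x, y} : Finset V) := by simp
  have hy : y ∈ ({x, y} : Finset V) := by simp
  have hA : G.neighborFinset x \ {x, y} ⊆ Cset c n := by
    rw [hH.nbr_sdiff h.toIsCyc hx]; exact Finset.inter_subset_right
  have hB : G.neighborFinset y \ {x, y} ⊆ Cset c n := by
    rw [hH.nbr_sdiff h.toIsCyc hy]; exact Finset.inter_subset_right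
  have hAa : ∀ v ∈ G.neighborFinset x \ {x, y}, G.Adj x v := by
    intro v hv; simpa using (Finset.mem_sdiff.1 hv).1
  have hBa : ∀ v ∈ G.neighborFinset y \ {x, y}, G.Adj y v := by
    intro v hv; simpa using (Finset.mem_sdiff.1 hv).1
  have dA := two_deg hδ x y
  have dB := two_deg hδ y x
  rw [Finset.pair_comm y x] at dB
  have f1 := few (x := y) (y := x) h (by rwa [Finset.pair_comm]) hxy.symm hδ hκ hN hS hE hxE hxS
  rw [Finset.pair_comm y x] at f1
  have f2 := few h.refl hH.refl hxy hδ hκ hN hS hE hyE hyS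
  have e2 : shiftS (fun i => c (-i)) (-1) (G.neighborFinset y \ {x, y}) =
      shiftS c 1 (G.neighborFinset y \ {x, y}) := by
    ext v
    rw [mem_shiftS, mem_shiftS]
    constructor
    · rintro ⟨i, hi, hi'⟩; exact ⟨-i, hi, by convert hi' using 2; ring⟩
    · rintro ⟨i, hi, hi'⟩; exact ⟨-i, by simpa using hi, by convert hi' using 2; ring⟩
  rw [e2] at f2
  set A := G.neighborFinset x \ {x, y} with hAdef
  set B := G.neighborFinset y \ {x, y} with hBdef
  have cA := card_shiftS h.toIsCyc (k := -1) hA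
  have cB := card_shiftS h.toIsCyc (k := 1) hB
  set SA := shiftS c (-1) A with hSA
  set PB := shiftS c 1 B with hPB
  set W := insert w (G.neighborFinset w) with hWdef
  have hWc : W.card = G.degree w + 1 := by
    rw [hWdef, Finset.card_insert_of_notMem (by simp), card_neighborFinset_eq_degree]
  have hWE : ∀ u ∈ W, u ∈ E ∨ u ∈ S := by
    intro u hu
    rw [hWdef, Finset.mem_insert, mem_neighborFinset] at hu
    rcases hu with rfl | hu
    · exact Or.inl hw
    · exact hE w hw u hu
  have hSAC : SA ⊆ Cset c n := by
    intro v hv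
    obtain ⟨i, hi, -⟩ := mem_shiftS.1 hv
    exact (mem_Cset h.toIsCyc).2 ⟨i, hi⟩
  have hPBC : PB ⊆ Cset c n := by
    intro v hv
    obtain ⟨i, hi, -⟩ := mem_shiftS.1 hv
    exact (mem_Cset h.toIsCyc).2 ⟨i, hi⟩
  have d1 : Disjoint A SA := by
    rw [Finset.disjoint_left]
    intro v hv hv'
    obtain ⟨i, rfl, hi⟩ := mem_shiftS.1 hv'
    have := (hH.t1 h hx hx (i := i + -1) (j := i) (by omega) (by omega) (hAa _ hi).symm (hAa _ hv)).1
    omega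
  have d2 : Disjoint A PB := by
    rw [Finset.disjoint_left]
    intro v hv hv'
    obtain ⟨i, rfl, hi⟩ := mem_shiftS.1 hv'
    have := (hH.t1 h hx hy (i := i) (j := i + 1) (by omega) (by omega) (hAa _ hv).symm (hBa _ hi)).1
    omega
  have d3 : Disjoint SA PB := by
    rw [Finset.disjoint_left]
    intro v hv hv'
    obtain ⟨i, rfl, hi⟩ := mem_shiftS.1 hv'
    obtain ⟨j, hj, hj'⟩ := mem_shiftS.1 hv
    rw [h.add_eq hj] at hj'
    have := (hH.t1 h hx hy (i := i + -1) (j := i + 1) (by omega) (by omega) (hAa _ hj').symm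
      (hBa _ hi)).2 hxy
    omega
  have d4 : Disjoint (A ∪ SA ∪ PB) {x, y} := by
    refine Finset.disjoint_of_subset_left (Finset.union_subset (Finset.union_subset hA hSAC) hPBC) ?_
    exact (hH.disjoint_Cset h.toIsCyc).symm
  set K := A ∪ SA ∪ PB ∪ {x, y} with hK
  have cK : K.card = A.card + SA.card + PB.card + 2 := by
    rw [hK, Finset.card_union_of_disjoint d4, Finset.card_union_of_disjoint (by
      rw [Finset.disjoint_union_left]; exact ⟨d2, d3⟩), Finset.card_union_of_disjoint d1,
      Finset.card_pair hxy]
  have hKWint : K ∩ W ⊆ S ∪ ((SA ∩ E) ∪ (PB ∩ E)) := by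
    intro v hv
    rw [Finset.mem_inter] at hv
    obtain ⟨hv1, hv2⟩ := hv
    rcases hWE v hv2 with hvE | hvS
    · apply Finset.mem_union_right
      simp only [hK, Finset.mem_union, Finset.mem_insert, Finset.mem_singleton] at hv1
      rcases hv1 with ((hv1 | hv1) | hv1) | (rfl | rfl)
      · exfalso
        rcases hE v hvE x (hAa v hv1).symm with h1 | h1
        · exact hxE h1
        · exact hxS h1
      · exact Finset.mem_union_left _ (Finset.mem_inter.2 ⟨hv1, hvE⟩)
      · exact Finset.mem_union_right _ (Finset.mem_inter.2 ⟨hv1, hvE⟩)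
      · exact absurd hvE hxE
      · exact absurd hvE hyE
    · exact Finset.mem_union_left _ hvS
  have c1 := Finset.card_le_card hKWint
  have c2 := Finset.card_union_le S ((SA ∩ E) ∪ (PB ∩ E))
  have c3 := Finset.card_union_le (SA ∩ E) (PB ∩ E)
  have c4 := Finset.card_union_add_card_inter K W
  have c5 := Finset.card_le_univ (K ∪ W)
  have := hδ w
  omega

/-- many tight gaps -/
theorem tight {x y : V} (h : LCyc G c n) (hH : Comp G c {x, y}) (hxy : x ≠ y) {δ κ : ℕ}
    (hδ : ∀ v, δ ≤ G.degree v) (hκ : 3 ≤ κ) (hN : Fintype.card V + 2 * κ ≤ 4 * δ)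
    {S : Finset V} (hS : S.card ≤ κ) :
    ∃ i : ℤ, 3 < n ∧ c (i + 1) ∉ S ∧ c (i + 2) ∉ S ∧
      ((G.Adj x (c i) ∧ G.Adj y (c (i + 3))) ∨ (G.Adj y (c i) ∧ G.Adj x (c (i + 3)))) := by
  have hn3 := h.three
  have hx : x ∈ ({x, y} : Finset V) := by simp
  have hy : y ∈ ({x, y} : Finset V) := by simp
  have hA : G.neighborFinset x \ {x, y} ⊆ Cset c n := by
    rw [hH.nbr_sdiff h.toIsCyc hx]; exact Finset.inter_subset_right
  have hB : G.neighborFinset y \ {x, y} ⊆ Cset c n := by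
    rw [hH.nbr_sdiff h.toIsCyc hy]; exact Finset.inter_subset_right
  have hAa : ∀ v ∈ G.neighborFinset x \ {x, y}, G.Adj x v := by
    intro v hv; simpa using (Finset.mem_sdiff.1 hv).1
  have hBa : ∀ v ∈ G.neighborFinset y \ {x, y}, G.Adj y v := by
    intro v hv; simpa using (Finset.mem_sdiff.1 hv).1
  have dA := two_deg hδ x y
  have dB := two_deg hδ y x
  rw [Finset.pair_comm y x] at dB
  have hNn := hH.card_add_le h.toIsCyc
  rw [Finset.card_pair hxy] at hNn
  set A := G.neighborFinset x \ {x, y} with hAdef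
  set B := G.neighborFinset y \ {x, y} with hBdef
  have hA2 : 2 ≤ A.card := by omega
  have hB2 : 2 ≤ B.card := by omega
  have hM2 : 2 ≤ (A ∪ B).card := hA2.trans (Finset.card_le_card Finset.subset_union_left)
  have hM : A ∪ B ⊆ Cset c n := Finset.union_subset hA hB
  obtain ⟨-, hp⟩ := cross2 h.toIsCyc hA hB (Finset.card_pos.1 (by omega))
    (Finset.card_pos.1 (by omega)) hM2
  set R : V → V → Prop := fun u w => (u ∈ A ∧ w ∈ B) ∨ (u ∈ B ∧ w ∈ A) with hR
  set F := goodF c (A ∪ B) R with hF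
  have hMH : ∀ m ∈ A ∪ B, ∃ s ∈ ({x, y} : Finset V), G.Adj s m := by
    intro m hm
    rcases Finset.mem_union.1 hm with hm | hm
    · exact ⟨x, hx, hAa m hm⟩
    · exact ⟨y, hy, hBa m hm⟩
  classical
  set T := F.filter (fun m => ∃ i, c i = m ∧ c (i + 3) ∈ A ∪ B) with hT
  have hgap := gap_sum h.toIsCyc hM
    (fun m => 2 + ((if m ∈ F then 1 else 0) + (if m ∈ F \ T then 1 else 0))) (by
    intro i d hi hNx
    have hlt := hNx.lt h.toIsCyc hM hM2
    have h1 := hNx.1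
    have hd2 : 2 ≤ d := by
      obtain ⟨s, hs, hs'⟩ := hMH _ hi
      obtain ⟨t, ht, ht'⟩ := hMH _ hNx.2.1
      have := (hH.t1 h hs ht (i := i) (j := i + d) (by omega) (by omega) hs'.symm ht').1
      omega
    by_cases hg : c i ∈ F
    · have hd3 : 3 ≤ d := by
        rw [hF, mem_goodF h.toIsCyc hNx] at hg
        rcases hg.2 with ⟨u, w⟩ | ⟨u, w⟩
        · have := (hH.t1 h hx hy (i := i) (j := i + d) (by omega) (by omega)
            (hAa _ u).symm (hBa _ w)).2 hxy
          omega
        · have := (hH.t1 h hy hx (i := i) (j := i + d) (by omega) (by omega)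
            (hBa _ u).symm (hAa _ w)).2 hxy.symm
          omega
      by_cases ht : c i ∈ T
      · simp [hg, ht]; omega
      · have : d ≠ 3 := by
          rintro rfl
          exact ht (Finset.mem_filter.2 ⟨hg, i, rfl, by simpa using hNx.2.1⟩)
        simp [hg, ht]; omega
    · simp [hg]; omega)
  rw [Finset.sum_add_distrib, Finset.sum_add_distrib, Finset.sum_const, ← Finset.sum_filter,
    ← Finset.sum_filter, Finset.filter_mem_eq_inter, Finset.inter_eq_right.2 goodF_sub,
    Finset.filter_mem_eq_inter, Finset.inter_eq_right.2 (Finset.sdiff_subset.trans goodF_sub),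
    Finset.sum_const, Finset.sum_const] at hgap
  simp only [smul_eq_mul, mul_one] at hgap
  have hTF : T ⊆ F := Finset.filter_subset _ _
  have c1 := Finset.card_sdiff_add_card_eq_card hTF
  have c2 := Finset.card_le_card hp
  have c3 := Finset.card_union_add_card_inter A B
  have hTc : κ + 1 ≤ T.card := by
    rw [← hF] at hgap
    omega
  have hTm : ∀ m ∈ T, ∃ i, c i = m ∧ Nxt c (A ∪ B) i 3 ∧ R (c i) (c (i + 3)) ∧ 3 < n := by
    intro m hm
    rw [hT, Finset.mem_filter] at hm
    obtain ⟨hmF, i, rfl, hi3⟩ := hm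
    obtain ⟨d, hNx, _⟩ := exists_nxt (M := A ∪ B) h.toIsCyc i ⟨_, hi3⟩
    have hlt := hNx.lt h.toIsCyc hM hM2
    have hg := hmF
    rw [hF, mem_goodF h.toIsCyc hNx] at hg
    have h1 := hNx.1
    have hd3 : 3 ≤ d := by
      rcases hg.2 with ⟨u, w⟩ | ⟨u, w⟩
      · have := (hH.t1 h hx hy (i := i) (j := i + d) (by omega) (by omega)
          (hAa _ u).symm (hBa _ w)).2 hxy
        omega
      · have := (hH.t1 h hy hx (i := i) (j := i + d) (by omega) (by omega)
          (hBa _ u).symm (hAa _ w)).2 hxy.symm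
        omega
    have : d = 3 := by
      by_contra hne
      exact hNx.2.2 3 (by omega) (by omega) (by simpa using hi3)
    subst this
    exact ⟨i, rfl, hNx, by simpa using hg.2, hlt⟩
  by_contra hcon
  push Not at hcon
  have hsel : ∀ m : V, ∃ u : V, m ∈ T → u ∈ S ∧ ∃ (i : ℤ) (e : ℕ), c i = m ∧ Nxt c (A ∪ B) i 3 ∧
      1 ≤ e ∧ e < 3 ∧ c (i + e) = u := by
    intro m
    by_cases hm : m ∈ T
    · obtain ⟨i, him, hNx, hRi, hlt⟩ := hTm m hm
      by_cases h1 : c (i + 1) ∈ S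
      · exact ⟨c (i + 1), fun _ => ⟨h1, i, 1, him, hNx, by omega, by omega, by simp⟩⟩
      · by_cases h2 : c (i + 2) ∈ S
        · exact ⟨c (i + 2), fun _ => ⟨h2, i, 2, him, hNx, by omega, by omega, by simp⟩⟩
        · exfalso
          obtain ⟨k1, k2⟩ := hcon i hlt h1 h2
          rcases hRi with ⟨u, w⟩ | ⟨u, w⟩
          · exact k1 (hAa _ u) (hBa _ w)
          · exact k2 (hBa _ u) (hAa _ w)
    · exact ⟨m, fun hh => absurd hh hm⟩
  choose f hf using hsel
  have : T.card ≤ S.card := by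
    apply Finset.card_le_card_of_injOn f
    · intro m hm; exact (hf m hm).1
    · have key : ∀ (i j : ℤ) (e e' : ℕ), c i ∈ A ∪ B → Nxt c (A ∪ B) j 3 → 1 ≤ e → e ≤ e' → e' < 3 →
          c (i + e) = c (j + e') → c i = c j := by
        intro i j e e' hi hj h1 h2 h3 he
        have h4 := h.add_eq he (-e)
        rw [show i + (e : ℤ) + -e = i by ring,
          show j + (e' : ℤ) + -e = j + ((e' - e : ℕ) : ℤ) by omega] at h4
        by_cases hee : e' - e = 0
        · rw [hee] at h4; simpa using h4
        · exact absurd (h4 ▸ hi) (hj.2.2 _ (by omega) (by omega))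
      intro m hm m' hm' he
      obtain ⟨-, i, e, him, hNi, e1, e2, e3⟩ := hf m hm
      obtain ⟨-, i', e', him', hNi', e1', e2', e3'⟩ := hf m' hm'
      have hmM : m ∈ A ∪ B := goodF_sub (hTF hm)
      have hmM' : m' ∈ A ∪ B := goodF_sub (hTF hm')
      rcases le_total e e' with hl | hl
      · rw [← him, ← him']
        exact key i i' e e' (him ▸ hmM) hNi' e1 hl e2' (by rw [e3, e3', he])
      · rw [← him, ← him']
        exact (key i' i e' e (him' ▸ hmM') hNi e1' hl e2 (by rw [e3, e3', he])).symm
  omega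

/-- the case of an edge component -/
theorem two_comp (hcut : Cut3 G) (h : LCyc G c n) (hH : Comp G c H) (hH2 : H.card = 2) {δ κ : ℕ}
    (hδ : ∀ v, δ ≤ G.degree v) (hκ : 3 ≤ κ) (hN : Fintype.card V + 2 * κ ≤ 4 * δ)
    {S E₁ E₂ : Finset V} (hS : S.card ≤ κ) (hcov : ∀ v, v ∈ S ∨ v ∈ E₁ ∨ v ∈ E₂)
    (hdis : ∀ v ∈ E₁, v ∉ E₂)
    (hE₁ : ∀ w ∈ E₁, ∀ u, G.Adj w u → u ∈ E₁ ∨ u ∈ S) (hE₁0 : E₁.Nonempty)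
    (hE₂ : ∀ w ∈ E₂, ∀ u, G.Adj w u → u ∈ E₂ ∨ u ∈ S) (hE₂0 : E₂.Nonempty) : False := by
  obtain ⟨x, y, hxy, rfl⟩ := Finset.card_eq_two.1 hH2
  obtain ⟨i, hn, h1, h2, hi⟩ := tight h hH hxy hδ hκ hN hS
  have hadj : G.Adj x y := by
    obtain ⟨P, hP, hPH⟩ := hH.conn x (by simp) y (by simp)
    obtain ⟨u, hu, v, hv, hu1, hv1, huv⟩ := hP.boundary (fun z => z = x) rfl hxy.symm
    have := hPH v hv
    simp only [Finset.mem_insert, Finset.mem_singleton] at this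
    rw [hu1, this.resolve_left hv1] at huv
    exact huv
  have swap : ∃ x' y', G.Adj x' y' ∧ G.Adj x' (c i) ∧ G.Adj y' (c (i + 3)) ∧
      (∀ k, c k ≠ x') ∧ (∀ k, c k ≠ y') := by
    have dx := hH.disj x (by simp)
    have dy := hH.disj y (by simp)
    rcases hi with ⟨a, b⟩ | ⟨a, b⟩
    · exact ⟨x, y, hadj, a, b, dx, dy⟩
    · exact ⟨y, x, hadj.symm, a, b, dy, dx⟩
  obtain ⟨x', y', hxy', ha, hb, dx, dy⟩ := swap
  have s1 := (PL.single G x').append (PL.single G y') hxy' (by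
    intro v hv hv'; simp at hv hv'; exact hxy'.ne (hv.symm.trans hv'))
  have s2 := h.segPL (i := i + 3) (d := n - 2) (by omega) (by omega) (e := i + n) (by omega)
  rw [h.per (b := i) rfl] at s2
  have s := s1.append s2 hb (by
    intro v hv hv'
    obtain ⟨j, _, _, hj⟩ := mem_seg.1 hv'
    simp at hv
    rcases hv with rfl | rfl
    · exact dx j hj
    · exact dy j hj)
  have hlen : ([x'] ++ [y'] ++ seg c (i + 3) (n - 2)).length = n := by simp; omega
  obtain ⟨c', hc1, hc2, -⟩ := exists_cyc s ha.symm (by omega)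
  rw [hlen] at hc1
  have h' : LCyc G c' n := ⟨hc1, h.max⟩
  have hoff : ∀ e : ℤ, 1 ≤ e → e ≤ 2 → ∀ k, c' k ≠ c (i + e) := by
    intro e he1 he2 k hk
    have := (hc2 (c (i + e))).1 ⟨k, hk⟩
    rw [List.mem_append, List.mem_append, List.mem_singleton, List.mem_singleton] at this
    rcases this with (hh | hh) | hh
    · exact dx _ hh
    · exact dy _ hh
    · obtain ⟨j, j1, j2, hj⟩ := mem_seg.1 hh
      exact h.sep (a := i + e) (b := j) (by omega) (by omega) hj.symm
  obtain ⟨H', hH', hm⟩ := exists_comp (G := G) (hoff 1 (by omega) (by omega))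
  have hm2 : c (i + 2) ∈ H' := by
    have := h.adj (i + 1)
    rw [add_assoc] at this
    refine (hH'.closed _ hm _ this).resolve_right ?_
    rintro ⟨k, hk⟩
    exact hoff 2 (by omega) (by omega) k hk
  have hne : c (i + 1) ≠ c (i + 2) := h.sep (by omega) (by omega)
  have hsub : {c (i + 1), c (i + 2)} ⊆ H' := by
    intro v hv
    simp only [Finset.mem_insert, Finset.mem_singleton] at hv
    rcases hv with rfl | rfl <;> assumption
  have heq : {c (i + 1), c (i + 2)} = H' := by
    apply Finset.eq_of_subset_of_card_le hsub
    rw [Finset.card_pair hne]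
    by_contra hlt
    exact big_comp hcut h' hH' hδ (by omega) (by omega)
  subst heq
  have hadj12 : G.Adj (c (i + 1)) (c (i + 2)) := by
    have := h.adj (i + 1); rwa [add_assoc] at this
  rcases (hcov (c (i + 1))).resolve_left h1 with h3 | h3
  · have h4 := (hE₁ _ h3 _ hadj12).resolve_right h2
    exact two_final h' hH' hne hδ hκ hN hS hE₂ hE₂0 (hdis _ h3) h1 (hdis _ h4) h2
  · have h4 := (hE₂ _ h3 _ hadj12).resolve_right h2
    exact two_final h' hH' hne hδ hκ hN hS hE₁ hE₁0 (fun hh => hdis _ hh h3) h1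
      (fun hh => hdis _ hh h4) h2

end
end NK

namespace NK

theorem exists_walk {G : SimpleGraph V} : ∀ (l : List V) (a b : V), PL G l a b →
    ∃ p : G.Walk a b, p.support = l := by
  intro l a b h
  obtain ⟨h1, h2, h3, h4⟩ := h
  have hne : l ≠ [] := by rintro rfl; simp at h3
  have e1 : l.head hne = a := by
    rw [List.head?_eq_some_head hne] at h3; exact Option.some.inj h3
  have e2 : l.getLast hne = b := by
    rw [List.getLast?_eq_some_getLast hne] at h4; exact Option.some.inj h4
  subst e1 e2
  exact ⟨Walk.ofSupport l hne h1, by simp⟩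

theorem hamiltonian_of_cyc [Fintype V] [DecidableEq V] {G : SimpleGraph V} {c : ℤ → V} {n : ℕ}
    (h : IsCyc G c n) (hall : ∀ v, ∃ i, c i = v) : G.IsHamiltonian := by
  intro _
  have hn3 := h.three
  have hn : n = Fintype.card V := by
    rw [← card_Cset h, ← Finset.card_univ]
    congr 1
    ext v
    simpa using (mem_Cset h).2 (hall v)
  have hP := h.segPL (i := 0) (d := n) (by omega) le_rfl (e := (n : ℤ) - 1) (by omega)
  obtain ⟨p, hp⟩ := exists_walk _ _ _ hP
  have hadj : G.Adj (c ((n : ℤ) - 1)) (c 0) := by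
    have := h.adj ((n : ℤ) - 1)
    rwa [sub_add_cancel, h.per (a := (n : ℤ)) (b := 0) (by omega)] at this
  have hlen : p.length + 1 = n := by
    have := p.length_support
    rw [hp, seg_length] at this
    exact this.symm
  have hpath : p.IsPath := by
    rw [Walk.isPath_def, hp]; exact hP.2.1
  refine ⟨_, Walk.cons hadj p, ?_⟩
  rw [Walk.isHamiltonianCycle_iff_isCycle_and_length_eq,
    Walk.isCycle_iff_isPath_tail_and_le_length]
  refine ⟨⟨?_, ?_⟩, ?_⟩
  · simpa using hpath
  · rw [Walk.length_cons]; omega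
  · rw [Walk.length_cons]; omega

theorem exists_lcyc [Fintype V] [DecidableEq V] {G : SimpleGraph V} [DecidableRel G.Adj]
    [Nonempty V] (hδ : ∀ v, 2 ≤ G.degree v) : ∃ c n, LCyc G c n := by
  have hle : ∀ (l : List V) a b, PL G l a b → l.length ≤ Fintype.card V := by
    intro l a b h
    exact h.length_le (H := Finset.univ) (by simp)
  obtain ⟨m, ⟨l, a, b, hl, rfl⟩, hmax⟩ := exists_max
    (p := fun k => ∃ l a b, PL G l a b ∧ l.length = k) (Fintype.card V)
    (by rintro k ⟨l, a, b, h, rfl⟩; exact hle l a b h)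
    ⟨_, _, _, _, PL.single G (Classical.arbitrary V), rfl⟩
  have hnb : ∀ v, G.Adj a v → v ∈ l := by
    intro v hv
    by_contra hvl
    have := (PL.single G v).append hl hv.symm (by
      intro x hx; rw [List.mem_singleton] at hx; subst hx; exact hvl)
    have := hmax _ ⟨_, _, _, this, rfl⟩
    simp at this
  obtain ⟨p, hinj, hadj, hmem, h0, -⟩ := hl.toFun
  have hex : ∃ i : ℤ, 2 ≤ i ∧ i < l.length ∧ G.Adj a (p i) := by
    obtain ⟨v, hv, hv1⟩ := Finset.exists_mem_ne (s := G.neighborFinset a)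
      (by rw [card_neighborFinset_eq_degree]; exact hδ a) (p 1)
    rw [mem_neighborFinset] at hv
    obtain ⟨i, i0, i1, rfl⟩ := (hmem v).1 (hnb v hv)
    refine ⟨i, ?_, i1, hv⟩
    by_contra hlt
    have : i = 0 ∨ i = 1 := by omega
    rcases this with rfl | rfl
    · rw [h0] at hv; simp at hv
    · exact hv1 rfl
  obtain ⟨i, i2, il, hai⟩ := hex
  have hseg := seg_PL (G := G) (c := p) (i := 0) (d := (i + 1).toNat) (by omega)
    (fun j h1 h2 => hadj j h1 (by omega)) (fun j k h1 h2 h3 => hinj j k h1 h2 (by omega))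
    (e := i) (by omega)
  obtain ⟨n, ⟨l', a', b', hl', hab', h3, rfl⟩, hmax'⟩ := exists_max
    (p := fun k => ∃ l a b, PL G l a b ∧ G.Adj b a ∧ 3 ≤ l.length ∧ l.length = k)
    (Fintype.card V)
    (by rintro k ⟨l, a, b, h, -, -, rfl⟩; exact hle l a b h)
    ⟨_, _, _, _, hseg, by rw [h0]; exact hai.symm, by rw [seg_length]; omega, rfl⟩
  obtain ⟨c, hc, -, -⟩ := exists_cyc hl' hab' h3
  refine ⟨c, _, hc, ?_⟩
  intro l a b h1 h2
  by_cases h4 : 3 ≤ l.length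
  · exact hmax' _ ⟨l, a, b, h1, h2, h4, rfl⟩
  · omega

theorem cut3 [Fintype V] [DecidableEq V] {G : SimpleGraph V} (h3 : KConnected G 3) : Cut3 G := by
  rintro T A hT ⟨p, hpA, hpT⟩ ⟨q, hqA, hqT⟩
  have hc := h3.2 T (by omega)
  obtain ⟨w⟩ := hc.preconnected ⟨p, by simpa using hpT⟩ ⟨q, by simpa using hqT⟩
  obtain ⟨d, -, d1, d2⟩ := w.exists_boundary_dart {v | v.1 ∈ A} hpA hqA
  exact ⟨d.fst.1, d.snd.1, d1, d2, fun hh => d.fst.2 hh, fun hh => d.snd.2 hh, d.adj⟩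

theorem one_comp [Fintype V] [DecidableEq V] {G : SimpleGraph V} [DecidableRel G.Adj]
    {c : ℤ → V} {n : ℕ} {v : V} (h : LCyc G c n) (hH : Comp G c {v}) :
    ∃ s : Finset V, (∀ u ∈ s, ∀ v ∈ s, ¬ G.Adj u v) ∧ G.degree v + 1 ≤ s.card := by
  have hn3 := h.three
  have hv : v ∈ ({v} : Finset V) := by simp
  have hA : G.neighborFinset v ⊆ Cset c n := by
    intro u hu
    rw [mem_neighborFinset] at hu
    rw [mem_Cset h.toIsCyc]
    refine (hH.closed v hv u hu).resolve_left ?_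
    rw [Finset.mem_singleton]; rintro rfl; simp at hu
  have hcard := card_shiftS h.toIsCyc (k := -1) hA
  rw [card_neighborFinset_eq_degree] at hcard
  have hvS : v ∉ shiftS c (-1) (G.neighborFinset v) := by
    intro hh
    obtain ⟨i, hi, -⟩ := mem_shiftS.1 hh
    exact hH.disj v hv i hi
  have hvN : ∀ u ∈ shiftS c (-1) (G.neighborFinset v), ¬ G.Adj v u := by
    intro u hu hvu
    obtain ⟨i, rfl, hi⟩ := mem_shiftS.1 hu
    rw [mem_neighborFinset] at hi
    have := (hH.t1 h hv hv (i := i + -1) (j := i) (by omega) (by omega) hi.symm hvu).1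
    omega
  have hSS : ∀ u ∈ shiftS c (-1) (G.neighborFinset v),
      ∀ w ∈ shiftS c (-1) (G.neighborFinset v), ¬ G.Adj u w := by
    intro u hu w hw huw
    obtain ⟨i, rfl, hi⟩ := mem_shiftS.1 hu
    obtain ⟨j, rfl, hj⟩ := mem_shiftS.1 hw
    obtain ⟨k, k1, k2, k3⟩ := h.window j i
    rw [← k3] at huw
    have hki : k ≠ i := by rintro rfl; simp at huw
    rw [← h.add_eq k3, mem_neighborFinset] at hj
    rw [mem_neighborFinset] at hi
    have := hH.e0 h hv hv (i := i + -1) (j := k + -1) (by omega) (by omega) hi.symm hj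
    rw [neg_add_cancel_right, neg_add_cancel_right] at this
    exact this huw
  refine ⟨insert v (shiftS c (-1) (G.neighborFinset v)), ?_, ?_⟩
  · intro u hu w hw
    rw [Finset.mem_insert] at hu hw
    rcases hu with rfl | hu <;> rcases hw with rfl | hw
    · simp
    · exact hvN w hw
    · exact fun hh => hvN u hu hh.symm
    · exact hSS u hu w hw
  · rw [Finset.card_insert_of_notMem hvS]; omega

theorem exists_sep [Fintype V] [DecidableEq V] {G : SimpleGraph V} {S : Finset V}
    (hne : S.card < Fintype.card V) (hS : ¬ (G.induce ((↑S : Set V)ᶜ)).Connected) :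
    ∃ E₁ E₂ : Finset V, (∀ v, v ∈ S ∨ v ∈ E₁ ∨ v ∈ E₂) ∧ (∀ v ∈ E₁, v ∉ E₂) ∧
      (∀ w ∈ E₁, ∀ u, G.Adj w u → u ∈ E₁ ∨ u ∈ S) ∧ E₁.Nonempty ∧
      (∀ w ∈ E₂, ∀ u, G.Adj w u → u ∈ E₂ ∨ u ∈ S) ∧ E₂.Nonempty := by
  classical
  obtain ⟨z, hz⟩ : ∃ z, z ∉ S := by
    by_contra hcon
    push Not at hcon
    rw [(Finset.eq_univ_iff_forall).2 hcon, Finset.card_univ] at hne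
    exact lt_irrefl _ hne
  have hpre : ¬ (G.induce ((↑S : Set V)ᶜ)).Preconnected := by
    intro hp
    exact hS ((connected_iff _).2 ⟨hp, ⟨⟨z, by simpa using hz⟩⟩⟩)
  unfold Preconnected at hpre
  push Not at hpre
  obtain ⟨x, y, hxy⟩ := hpre
  let P : V → Prop := fun w => ∃ hw : w ∈ ((↑S : Set V)ᶜ),
    (G.induce ((↑S : Set V)ᶜ)).Reachable x ⟨w, hw⟩
  have hstep : ∀ w u, P w → G.Adj w u → u ∉ S → P u := by
    rintro w u ⟨hw, hr⟩ ha hu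
    refine ⟨by simpa using hu, hr.trans (Adj.reachable ?_)⟩
    exact ha
  have hPS : ∀ w, P w → w ∉ S := by
    rintro w ⟨hw, -⟩; simpa using hw
  refine ⟨Finset.univ.filter P, Finset.univ.filter (fun w => w ∉ S ∧ ¬ P w), ?_, ?_, ?_, ?_, ?_, ?_⟩
  · intro v
    simp only [Finset.mem_filter, Finset.mem_univ, true_and]
    tauto
  · intro v
    simp only [Finset.mem_filter, Finset.mem_univ, true_and]
    tauto
  · intro w hw u hu
    simp only [Finset.mem_filter, Finset.mem_univ, true_and] at hw ⊢
    have := hstep w u hw hu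
    tauto
  · exact ⟨x.1, Finset.mem_filter.2 ⟨Finset.mem_univ _, x.2, Reachable.refl _⟩⟩
  · intro w hw u hu
    simp only [Finset.mem_filter, Finset.mem_univ, true_and] at hw ⊢
    have := hstep u w
    have := hu.symm
    tauto
  · refine ⟨y.1, ?_⟩
    simp only [Finset.mem_filter, Finset.mem_univ, true_and]
    refine ⟨fun hh => y.2 hh, ?_⟩
    rintro ⟨hw, hr⟩
    exact hxy hr

end NK

theorem nikoghosyan_1985_hamiltonian (G : SimpleGraph V) [Fintype V] [DecidableEq V] [DecidableRel G.Adj]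
    (h3 : KConnected G 3)
    (hδ : (G.minDegree : ℝ) ≥
      max ((Fintype.card V + 2 * connectivity G : ℝ) / 4) (indepNumber G : ℝ)) :
    G.IsHamiltonian := by
  have hbdd : BddAbove {k | KConnected G k} := ⟨Fintype.card V, fun k hk => hk.1.le⟩
  have hκ3 : 3 ≤ connectivity G := le_csSup hbdd h3
  have hκK : KConnected G (connectivity G) := Nat.sSup_mem ⟨3, h3⟩ hbdd
  have hκN : connectivity G < Fintype.card V := hκK.1
  have hκ1 : ¬ KConnected G (connectivity G + 1) := by
    intro hh
    have : connectivity G + 1 ≤ connectivity G := le_csSup hbdd hh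
    omega
  have hN : Fintype.card V + 2 * connectivity G ≤ 4 * G.minDegree := by
    have h1 := (le_max_left _ _).trans hδ
    have h2 : (Fintype.card V + 2 * connectivity G : ℝ) ≤ 4 * G.minDegree := by linarith
    exact_mod_cast h2
  have hα : indepNumber G ≤ G.minDegree := by
    have h1 := (le_max_right _ _).trans hδ
    exact_mod_cast h1
  have hdeg : ∀ v, G.minDegree ≤ G.degree v := fun v => G.minDegree_le_degree v
  have : Nonempty V := Fintype.card_pos_iff.1 (by omega)
  obtain ⟨c, n, h⟩ := NK.exists_lcyc (G := G) (fun v => by have := hdeg v; omega)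
  by_cases hall : ∀ v, ∃ i, c i = v
  · exact NK.hamiltonian_of_cyc h.toIsCyc hall
  exfalso
  push Not at hall
  obtain ⟨v, hv⟩ := hall
  obtain ⟨H, hH, hvH⟩ := NK.exists_comp (G := G) hv
  have hcut := NK.cut3 h3
  by_cases hc3 : 3 ≤ H.card
  · exact NK.big_comp hcut h hH hdeg (by omega) hc3
  by_cases hc2 : H.card = 2
  · have hlt : ∃ S : Finset V, S.card ≤ connectivity G ∧
        ¬ (G.induce ((↑S : Set V)ᶜ)).Connected := by
      by_contra hcon
      push Not at hcon
      by_cases hNk : connectivity G + 1 < Fintype.card V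
      · exact hκ1 ⟨hNk, fun S hS => hcon S (by omega)⟩
      · have f2 := NK.F2 hcut h hH hdeg (by omega) hvH
        have h1 := NK.deg_split (H := H) (G := G) v
        have h2 : (G.neighborFinset v ∩ H).card ≤ H.card :=
          Finset.card_le_card Finset.inter_subset_right
        have := hdeg v
        omega
    obtain ⟨S, hS, hSc⟩ := hlt
    obtain ⟨E₁, E₂, h1, h2, h4, h5, h6, h7⟩ := NK.exists_sep (by omega) hSc
    exact NK.two_comp hcut h hH hc2 hdeg hκ3 hN hS h1 h2 h4 h5 h6 h7
  · have hc1 : H.card = 1 := by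
      have := Finset.card_pos.2 ⟨v, hvH⟩
      omega
    obtain ⟨w, rfl⟩ := Finset.card_eq_one.1 hc1
    obtain ⟨s, hs, hcard⟩ := NK.one_comp h hH
    have hbd : BddAbove {k | ∃ s : Finset V, (∀ u ∈ s, ∀ v ∈ s, ¬ G.Adj u v) ∧ s.card = k} := by
      refine ⟨Fintype.card V, ?_⟩
      rintro k ⟨s, -, rfl⟩
      exact Finset.card_le_univ s
    have : s.card ≤ indepNumber G := le_csSup hbd ⟨s, hs, rfl⟩
    have := hdeg w
    omega
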